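/- Let 1<p<∞ with conjugate p' ≤ p, and let 0 < α < n/p'. If additionally α > n/p fails to hold, assume instead p > n/α so that H^α_p ⊂ L_∞. Then ‖φψ‖_{H^α_{p'}} ≤ C‖φ‖_{H^α_p}‖ψ‖_{H^α_{p'}} for all φ, ψ ∈ C_c^∞(ℝⁿ), provided p > n/α. -/

import Mathlib

open MeasureTheory FourierTransform Real Metric Complex
open scoped ENNReal Topology

noncomputable section

/-- Euclidean space ℝⁿ. -/
abbrev Euc (n : ℕ) := EuclideanSpace ℝ (Fin n)

/-- A test function: infinitely differentiable with compact support (`φ ∈ C_c^∞(ℝⁿ)`). -/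
def IsTest {n : ℕ} (φ : Euc n → ℂ) : Prop :=
  ContDiff ℝ (⊤ : ℕ∞) φ ∧ HasCompactSupport φ

/-- The Bessel potential `(1-Δ)^{α/2} f`, realized via the Fourier transform:
`𝓕⁻¹ ((1+|ξ|²)^{α/2} 𝓕 f)`. -/
def besselPotential (n : ℕ) (α : ℝ) (f : Euc n → ℂ) : Euc n → ℂ :=
  𝓕⁻ (fun ξ : Euc n => (((1 + ‖ξ‖ ^ 2) ^ (α / 2) : ℝ) : ℂ) * 𝓕 f ξ)

/-- The Bessel-potential Sobolev norm `‖f‖_{H^α_p} = ‖(1-Δ)^{α/2} f‖_{L_p}`,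
with `p ∈ [1,∞]` an extended real exponent. -/
def HNormE (n : ℕ) (α : ℝ) (p : ℝ≥0∞) (f : Euc n → ℂ) : ℝ :=
  (eLpNorm (besselPotential n α f) p volume).toReal

/-- The Bessel-potential Sobolev norm, for a real exponent `p`. -/
def HNorm (n : ℕ) (α p : ℝ) (f : Euc n → ℂ) : ℝ :=
  HNormE n α (ENNReal.ofReal p) f

/-- Membership of a function in `H^α_p`. -/
def MemH (n : ℕ) (α p : ℝ) (f : Euc n → ℂ) : Prop :=
  eLpNorm (besselPotential n α f) (ENNReal.ofReal p) volume < ⊤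

/-- The Hölder conjugate exponent `p' = p/(p-1)` (as a real number, for `1 < p < ∞`). -/
def conjExp (p : ℝ) : ℝ := p / (p - 1)

/-- The Hölder conjugate exponent as an extended real exponent (`1' = ∞`). -/
def conjExpE (p : ℝ) : ℝ≥0∞ := if p ≤ 1 then ∞ else ENNReal.ofReal (p / (p - 1))

/-- Distributions, modelled as functionals on functions on ℝⁿ;
they are only ever applied to (products of) test functions. -/
def Distr (n : ℕ) := (Euc n → ℂ) → ℂ

/-- The product of a function and a distribution: `(φμ)(ψ) = μ(φψ)`. -/
def distMul {n : ℕ} (φ : Euc n → ℂ) (μ : Distr n) : Distr n :=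
  fun ψ => μ (fun x => φ x * ψ x)

/-- `μ` lies in `H^{-γ}_r` with constant `C`: `|⟨μ, ψ⟩| ≤ C‖ψ‖_{H^γ_{r'}}` for all test
functions `ψ` (`C_c^∞` being dense in `H^γ_{r'}`, this realizes the dual norm). -/
def NegBound (n : ℕ) (γ r : ℝ) (μ : Distr n) (C : ℝ) : Prop :=
  0 ≤ C ∧ ∀ ψ : Euc n → ℂ, IsTest ψ → ‖μ ψ‖ ≤ C * HNormE n γ (conjExpE r) ψ

/-- Membership `μ ∈ H^{-γ}_r` for a distribution `μ`. -/
def MemNeg (n : ℕ) (γ r : ℝ) (μ : Distr n) : Prop := ∃ C, NegBound n γ r μ C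

/-- The norm `‖μ‖_{H^{-γ}_r}`, as the best constant. -/
def negNorm (n : ℕ) (γ r : ℝ) (μ : Distr n) : ℝ := sInf {C | NegBound n γ r μ C}

/-- `μ ∈ H^{-γ}_{r,loc}`: every localization `φμ` by a test function lies in `H^{-γ}_r`. -/
def MemNegLoc (n : ℕ) (γ r : ℝ) (μ : Distr n) : Prop :=
  ∀ φ : Euc n → ℂ, IsTest φ → MemNeg n γ r (distMul φ μ)

/-- `μ` is a multiplier from `H^α_p` to `H^{-α}_p` with constant `C`:
`‖μφ‖_{H^{-α}_p} ≤ C ‖φ‖_{H^α_p}` for all test functions `φ`. -/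
def MulBound (n : ℕ) (α p : ℝ) (μ : Distr n) (C : ℝ) : Prop :=
  0 ≤ C ∧ ∀ φ : Euc n → ℂ, IsTest φ → negNorm n α p (distMul φ μ) ≤ C * HNorm n α p φ

/-- `μ ∈ M[H^α_p → H^{-α}_p]`. -/
def IsMultiplier (n : ℕ) (α p : ℝ) (μ : Distr n) : Prop :=
  MemNegLoc n α p μ ∧ ∃ C, MulBound n α p μ C

/-- The multiplier norm `‖μ‖_{M^α_p}`. -/
def mulNorm (n : ℕ) (α p : ℝ) (μ : Distr n) : ℝ := sInf {C | MulBound n α p μ C}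

/-- A fixed admissible cutoff: smooth, compactly supported, nonnegative, `≡ 1` on the
unit ball. -/
def IsCutoff {n : ℕ} (η : Euc n → ℝ) : Prop :=
  ContDiff ℝ (⊤ : ℕ∞) η ∧ HasCompactSupport η ∧ (∀ x, 0 ≤ η x) ∧
    ∀ x ∈ closedBall (0 : Euc n) 1, η x = 1

/-- The translated cutoff `η(· − z)`, as a complex-valued function. -/
def shiftCutoff {n : ℕ} (η : Euc n → ℝ) (z : Euc n) : Euc n → ℂ :=
  fun x => ((η (x - z) : ℝ) : ℂ)

/-- `u ∈ H^α_{p,unif}` (with respect to the cutoff `η`). -/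
def MemHUnif (n : ℕ) (η : Euc n → ℝ) (α p : ℝ) (u : Euc n → ℂ) : Prop :=
  BddAbove (Set.range fun z : Euc n => HNorm n α p (fun x => shiftCutoff η z x * u x))

/-- The norm `‖u‖_{α,p,unif} = sup_z ‖η(·-z)u‖_{H^α_p}`. -/
def unifNorm (n : ℕ) (η : Euc n → ℝ) (α p : ℝ) (u : Euc n → ℂ) : ℝ :=
  ⨆ z : Euc n, HNorm n α p (fun x => shiftCutoff η z x * u x)

/-- `μ ∈ H^{-γ}_{r,unif}` (for a distribution `μ`). -/
def MemNegUnif (n : ℕ) (η : Euc n → ℝ) (γ r : ℝ) (μ : Distr n) : Prop :=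
  (∀ z : Euc n, MemNeg n γ r (distMul (shiftCutoff η z) μ)) ∧
    BddAbove (Set.range fun z : Euc n => negNorm n γ r (distMul (shiftCutoff η z) μ))

/-- The norm `‖μ‖_{-γ,r,unif} = sup_z ‖η(·-z)μ‖_{H^{-γ}_r}`. -/
def negUnifNorm (n : ℕ) (η : Euc n → ℝ) (γ r : ℝ) (μ : Distr n) : ℝ :=
  ⨆ z : Euc n, negNorm n γ r (distMul (shiftCutoff η z) μ)

/-- Polking's nonlinear operator
`D^η_{ρ,q} u(x) = [∫_0^∞ (∫_{B₁} |u(x+ξy)-u(x)|^ρ dy)^{q/ρ} ξ^{-1-ηq} dξ]^{1/q}`. -/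
def Dop (n : ℕ) (η ρ q : ℝ) (u : Euc n → ℂ) (x : Euc n) : ℝ :=
  (∫ ξ in Set.Ioi (0 : ℝ),
      (∫ y in ball (0 : Euc n) 1, ‖u (x + ξ • y) - u x‖ ^ ρ) ^ (q / ρ) *
        ξ ^ (-1 - η * q)) ^ (1 / q)

/-- The `i`-th standard basis vector of ℝⁿ. -/
def eucBasis (n : ℕ) (i : Fin n) : Euc n := EuclideanSpace.single i 1

/-- The negative Laplacian `-Δ f = -∑ ∂²f/∂x_i²`. -/
def negLap {n : ℕ} (f : Euc n → ℂ) : Euc n → ℂ := fun x =>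
  -∑ i : Fin n, fderiv ℝ (fun y => fderiv ℝ f y (eucBasis n i)) x (eucBasis n i)

/-- The polyharmonic operator `(-Δ)^m`. -/
def polyharmonic (n m : ℕ) (f : Euc n → ℂ) : Euc n → ℂ := negLap^[m] f

/-- The Schrödinger-type operator `L u = (-Δ)^m u + q·u`, viewed as a distribution when
applied to a (test) function `u`. -/
def schrodingerOp (n m : ℕ) (q : Distr n) (u : Euc n → ℂ) : Distr n :=
  fun ψ => (∫ x : Euc n, polyharmonic n m u x * ψ x) + q (fun x => u x * ψ x)

/-- Boundedness of `L = (-Δ)^m + q` from `H^m_p` to `H^{-m}_p`: defined first on test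
functions (and then extended by density). -/
def LBounded (n m : ℕ) (p : ℝ) (q : Distr n) : Prop :=
  ∃ C, 0 ≤ C ∧ ∀ u : Euc n → ℂ, IsTest u →
    MemNeg n m p (schrodingerOp n m q u) ∧
      negNorm n m p (schrodingerOp n m q u) ≤ C * HNorm n m p u

end

/-!
The symbol `(1 + |ξ|²)^{α/2}` of `J^α = (1 - Δ)^{α/2}` is the restriction to `{1} × ℝⁿ` of the
homogeneous function `‖Ξ‖^α` on `ℝ × ℝⁿ`. Hence `J^α f` is, up to a constant, the integral of the
centered differences of order `2k` of `f` along the twisted translations `f ↦ 𝐞(θ) f(· + w)`,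
against the measure `‖W‖^{-(n+1)-α} dW` in `W = (θ, w)`.

Applied to a product `φψ`, each difference has a Leibniz expansion whose two extreme terms
reassemble into `φ J^α ψ + ψ J^α φ`. In every other term the differences fall on both factors, and
since `α > n/p` the smoothness `2α` available in total pays for the loss of integrability `n/p` in
Hölder's inequality with some `ε > 0` to spare: the term is `O(min(1, ‖W‖)^{α + ε/2})` in `L^q`, so
by Minkowski's inequality its integral over `W` converges. The two extreme terms are bounded by
Hölder's inequality together with `H^α_p ⊂ L^∞` and `H^α_q ⊂ L^s`, `1/s = 1/q - 1/p`.

The bounds for `J^{-α}` that enter come from subordination: `J^{-α}` is the average of the heat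
semigroup over a Gamma-distributed time.
-/

section Minkowski

variable {X W : Type*} [MeasurableSpace X] [MeasurableSpace W] {ν : Measure X} {μ : Measure W}

theorem lintegral_rpow_le_measure_univ_rpow_mul_lintegral {q : ℝ} (hq : 1 ≤ q) {f : W → ℝ≥0∞}
    (hf : AEMeasurable f μ) :
    (∫⁻ w, f w ∂μ) ^ q ≤ μ Set.univ ^ (q - 1) * ∫⁻ w, f w ^ q ∂μ := by
  have hq0 : 0 < q := by linarith
  have h := eLpNorm'_le_eLpNorm'_mul_rpow_measure_univ one_pos hq hf.aestronglyMeasurable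
  simp only [eLpNorm'_eq_lintegral_enorm, enorm_eq_self, ENNReal.rpow_one, div_one] at h
  calc (∫⁻ w, f w ∂μ) ^ q
      ≤ ((∫⁻ w, f w ^ q ∂μ) ^ (1 / q) * μ Set.univ ^ (1 - 1 / q)) ^ q := by gcongr
    _ = μ Set.univ ^ (q - 1) * ∫⁻ w, f w ^ q ∂μ := by
      rw [ENNReal.mul_rpow_of_nonneg _ _ hq0.le, ← ENNReal.rpow_mul, ← ENNReal.rpow_mul,
        one_div_mul_cancel hq0.ne', ENNReal.rpow_one, mul_comm, sub_mul, one_div_mul_cancel hq0.ne',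
        one_mul]

theorem measurable_eLpNorm_left [SFinite ν] (q : ℝ≥0∞) {F : X → W → ℝ≥0∞}
    (hF : Measurable (Function.uncurry F)) : Measurable fun w => eLpNorm (fun x => F x w) q ν := by
  rcases eq_or_ne q 0 with rfl | hq0
  · simp
  rcases eq_or_ne q ∞ with rfl | hqt
  · refine measurable_of_Ioi fun c => ?_
    have hc : (fun w => eLpNorm (fun x => F x w) ∞ ν) ⁻¹' Set.Ioi c =
        {w | 0 < ν {x | c < F x w}} := by
      ext w
      simp only [eLpNorm_exponent_top, eLpNormEssSup, enorm_eq_self, Set.mem_preimage, Set.mem_Ioi,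
        Set.mem_ofPred_eq, ← not_le, not_iff_not, nonpos_iff_eq_zero]
      refine ⟨fun h => ?_, fun h => essSup_le_of_ae_le c (ae_iff.2 h)⟩
      exact ae_iff.1 ((ENNReal.ae_le_essSup fun x => F x w).mono fun x hx => hx.trans h)
    rw [hc]
    exact measurableSet_lt measurable_const
      (measurable_measure_prodMk_right (measurableSet_lt measurable_const hF))
  · simp only [eLpNorm_eq_lintegral_rpow_enorm_toReal hq0 hqt, enorm_eq_self]
    exact ((hF.pow_const _).lintegral_prod_left').pow_const _

theorem eLpNorm_top_lintegral_le_lintegral_eLpNorm_top [SFinite ν] [SFinite μ]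
    {F : X → W → ℝ≥0∞} (hF : Measurable (Function.uncurry F)) :
    eLpNorm (fun x => ∫⁻ w, F x w ∂μ) ∞ ν ≤ ∫⁻ w, eLpNorm (fun x => F x w) ∞ ν ∂μ := by
  have hmeas : MeasurableSet {z : W × X | F z.2 z.1 ≤ eLpNorm (fun x => F x z.1) ∞ ν} :=
    measurableSet_le (hF.comp measurable_swap) ((measurable_eLpNorm_left ∞ hF).comp measurable_fst)
  have hae : ∀ᵐ w ∂μ, ∀ᵐ x ∂ν, F x w ≤ eLpNorm (fun x => F x w) ∞ ν :=
    ae_of_all _ fun w => by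
      simpa [eLpNormEssSup] using ENNReal.ae_le_essSup (μ := ν) fun x => F x w
  rw [eLpNorm_exponent_top]
  refine essSup_le_of_ae_le _ ?_
  filter_upwards [(Measure.ae_ae_comm hmeas).1 hae] with x hx
  simpa using lintegral_mono_ae hx

theorem lintegral_rpow_lintegral_mul_le [SFinite ν] [SFinite μ] {r : ℝ} (hr : 1 ≤ r)
    {N : W → ℝ≥0∞} (hN : Measurable N) {h : X → W → ℝ≥0∞} (hh : Measurable (Function.uncurry h))
    (hle : ∀ w, ∫⁻ x, h x w ^ r ∂ν ≤ 1) :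
    ∫⁻ x, (∫⁻ w, N w * h x w ∂μ) ^ r ∂ν ≤ (∫⁻ w, N w ∂μ) ^ r := by
  have hhx (x : X) : Measurable (h x) := hh.comp measurable_prodMk_left
  have hmass : μ.withDensity N Set.univ = ∫⁻ w, N w ∂μ := by
    rw [withDensity_apply _ .univ, Measure.restrict_univ]
  calc ∫⁻ x, (∫⁻ w, N w * h x w ∂μ) ^ r ∂ν
      = ∫⁻ x, (∫⁻ w, h x w ∂μ.withDensity N) ^ r ∂ν := by
        simp only [lintegral_withDensity_eq_lintegral_mul _ hN (hhx _), Pi.mul_apply]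
    _ ≤ ∫⁻ x, (∫⁻ w, N w ∂μ) ^ (r - 1) * ∫⁻ w, h x w ^ r ∂μ.withDensity N ∂ν :=
        lintegral_mono fun x => hmass ▸
          lintegral_rpow_le_measure_univ_rpow_mul_lintegral hr (hhx x).aemeasurable
    _ = (∫⁻ w, N w ∂μ) ^ (r - 1) * ∫⁻ w, ∫⁻ x, h x w ^ r ∂ν ∂μ.withDensity N := by
        have hmeas : Measurable fun x => ∫⁻ w, h x w ^ r ∂μ.withDensity N :=
          (hh.pow_const r).lintegral_prod_right'
        rw [lintegral_const_mul _ hmeas, lintegral_lintegral_swap (hh.pow_const r).aemeasurable]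
    _ ≤ (∫⁻ w, N w ∂μ) ^ (r - 1) * ∫⁻ _, 1 ∂μ.withDensity N := by
        gcongr with w
        exact hle w
    _ = (∫⁻ w, N w ∂μ) ^ r := by
        rw [lintegral_one, hmass]
        nth_rewrite 2 [← ENNReal.rpow_one (∫⁻ w, N w ∂μ)]
        rw [← ENNReal.rpow_add_of_nonneg _ _ (by linarith) zero_le_one, sub_add_cancel]

/-- Where `F · w` has finite nonzero norm, divide by that norm: Jensen's inequality for the measure
with density `w ↦ ‖F · w‖_q` then applies to the normalized functions. -/
theorem eLpNorm_lintegral_le_lintegral_eLpNorm [SFinite ν] [SFinite μ] {q : ℝ≥0∞} (hq : 1 ≤ q)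
    {F : X → W → ℝ≥0∞} (hF : Measurable (Function.uncurry F)) :
    eLpNorm (fun x => ∫⁻ w, F x w ∂μ) q ν ≤ ∫⁻ w, eLpNorm (fun x => F x w) q ν ∂μ := by
  rcases eq_or_ne q ∞ with rfl | hqt
  · exact eLpNorm_top_lintegral_le_lintegral_eLpNorm_top hF
  have hq0 : q ≠ 0 := (zero_lt_one.trans_le hq).ne'
  have hr : 1 ≤ q.toReal := by simpa using ENNReal.toReal_mono hqt hq
  set r := q.toReal with hr_def
  have hr0 : 0 < r := one_pos.trans_le hr
  set N : W → ℝ≥0∞ := fun w => eLpNorm (fun x => F x w) q ν with hN_def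
  have hN : Measurable N := measurable_eLpNorm_left q hF
  rcases eq_or_ne (∫⁻ w, N w ∂μ) ∞ with htop | htop
  · exact htop ▸ le_top
  have hFN : Measurable (fun z : X × W => F z.1 z.2 / N z.2) := hF.div (hN.comp measurable_snd)
  have hFw (w : W) : Measurable fun x => F x w := hF.comp measurable_prodMk_right
  have hcancel : ∀ᵐ x ∂ν, ∀ᵐ w ∂μ, F x w = N w * (F x w / N w) := by
    have hmeas : MeasurableSet {z : W × X | F z.2 z.1 = N z.1 * (F z.2 z.1 / N z.1)} :=
      measurableSet_eq_fun (hF.comp measurable_swap)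
        ((hN.comp measurable_fst).mul (hFN.comp measurable_swap))
    refine (Measure.ae_ae_comm hmeas).1 ?_
    filter_upwards [ae_lt_top hN htop] with w hw
    rcases eq_or_ne (N w) 0 with h0 | h0
    · filter_upwards [(eLpNorm_eq_zero_iff (hFw w).aestronglyMeasurable hq0).1 h0] with x hx
      simpa [h0] using hx
    · exact ae_of_all _ fun x => (ENNReal.mul_div_cancel h0 hw.ne).symm
  have hnormalized (w : W) : ∫⁻ x, (F x w / N w) ^ r ∂ν ≤ 1 := by
    have hN_eq : ∫⁻ x, F x w ^ r ∂ν = N w ^ r := by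
      simp only [hN_def, eLpNorm_eq_lintegral_rpow_enorm_toReal hq0 hqt, enorm_eq_self, ← hr_def,
        ← ENNReal.rpow_mul, one_div_mul_cancel hr0.ne', ENNReal.rpow_one]
    simp only [div_eq_mul_inv, ENNReal.mul_rpow_of_nonneg _ _ hr0.le]
    rw [lintegral_mul_const _ ((hFw w).pow_const r), hN_eq, ← ENNReal.mul_rpow_of_nonneg _ _ hr0.le]
    exact ENNReal.rpow_le_one (ENNReal.mul_inv_le_one _) hr0.le
  rw [eLpNorm_eq_lintegral_rpow_enorm_toReal hq0 hqt, one_div, ENNReal.rpow_inv_le_iff hr0]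
  calc ∫⁻ x, ‖∫⁻ w, F x w ∂μ‖ₑ ^ r ∂ν = ∫⁻ x, (∫⁻ w, N w * (F x w / N w) ∂μ) ^ r ∂ν :=
        lintegral_congr_ae (hcancel.mono fun x hx => by simp [lintegral_congr_ae hx])
    _ ≤ (∫⁻ w, N w ∂μ) ^ r := lintegral_rpow_lintegral_mul_le hr hN hFN hnormalized

theorem eLpNorm_integral_le_lintegral_eLpNorm [SFinite ν] [SFinite μ] {q : ℝ≥0∞} (hq : 1 ≤ q)
    {G : Type*} [NormedAddCommGroup G] [NormedSpace ℝ G] {f : X → W → G}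
    (hf : StronglyMeasurable (Function.uncurry f)) :
    eLpNorm (fun x => ∫ w, f x w ∂μ) q ν ≤ ∫⁻ w, eLpNorm (fun x => f x w) q ν ∂μ := calc
  eLpNorm (fun x => ∫ w, f x w ∂μ) q ν ≤ eLpNorm (fun x => ∫⁻ w, ‖f x w‖ₑ ∂μ) q ν :=
    eLpNorm_mono_enorm fun x => enorm_integral_le_lintegral_enorm _
  _ ≤ ∫⁻ w, eLpNorm (fun x => ‖f x w‖ₑ) q ν ∂μ :=
    eLpNorm_lintegral_le_lintegral_eLpNorm hq hf.enorm
  _ = ∫⁻ w, eLpNorm (fun x => f x w) q ν ∂μ := by simp only [eLpNorm_enorm]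

end Minkowski

section Translation

theorem eLpNorm_le_eLpNorm_rpow_mul_eLpNorm_top_rpow {X F : Type*} [MeasurableSpace X]
    [NormedAddCommGroup F] {ν : Measure X} {q s : ℝ≥0∞} (hq : q ≠ 0) (hqs : q ≤ s) {f : X → F}
    (hf : AEStronglyMeasurable f ν) :
    eLpNorm f s ν ≤ eLpNorm f q ν ^ (q.toReal / s.toReal) *
      eLpNorm f ∞ ν ^ (1 - q.toReal / s.toReal) := by
  rcases eq_or_ne s ∞ with rfl | hs
  · simp
  have hqt : q ≠ ∞ := (hqs.trans_lt hs.lt_top).ne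
  have hq0 : 0 < q.toReal := ENNReal.toReal_pos hq hqt
  have hqs' : q.toReal ≤ s.toReal := ENNReal.toReal_mono hs hqs
  have hs0 : 0 < s.toReal := hq0.trans_le hqs'
  have hpow : ∫⁻ x, ‖f x‖ₑ ^ s.toReal ∂ν ≤
      (∫⁻ x, ‖f x‖ₑ ^ q.toReal ∂ν) * eLpNorm f ∞ ν ^ (s.toReal - q.toReal) := calc
    _ = ∫⁻ x, ‖f x‖ₑ ^ q.toReal * ‖f x‖ₑ ^ (s.toReal - q.toReal) ∂ν := by
      simp only [← ENNReal.rpow_add_of_nonneg _ _ hq0.le (sub_nonneg.2 hqs'), add_sub_cancel]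
    _ ≤ ∫⁻ x, ‖f x‖ₑ ^ q.toReal * eLpNorm f ∞ ν ^ (s.toReal - q.toReal) ∂ν := by
      refine lintegral_mono_ae ?_
      filter_upwards [enorm_ae_le_eLpNormEssSup f ν] with x hx
      rw [← eLpNorm_exponent_top] at hx
      gcongr
    _ = _ := lintegral_mul_const'' _ (hf.enorm.pow_const _)
  rw [eLpNorm_eq_lintegral_rpow_enorm_toReal (hq.bot_lt.trans_le hqs).ne' hs,
    eLpNorm_eq_lintegral_rpow_enorm_toReal hq hqt, ← ENNReal.rpow_mul, one_div_mul_eq_div,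
    div_div_cancel_left' hq0.ne', one_div, ENNReal.rpow_inv_le_iff hs0,
    ENNReal.mul_rpow_of_nonneg _ _ hs0.le, ← ENNReal.rpow_mul, ← ENNReal.rpow_mul,
    inv_mul_cancel₀ hs0.ne', ENNReal.rpow_one, sub_mul, one_mul, div_mul_cancel₀ _ hs0.ne']
  exact hpow

variable {G F : Type*} [AddCommGroup G] [MeasurableSpace G] [MeasurableAdd₂ G] [MeasurableNeg G]
  [NormedAddCommGroup F] [NormedSpace ℝ F] {ν γ : Measure G} {q s c : ℝ≥0∞} {f : G → F}

theorem eLpNorm_integral_sub_right_le [SFinite ν] [ν.IsAddRightInvariant] [IsProbabilityMeasure γ]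
    (hq : 1 ≤ q) (hf : StronglyMeasurable f) :
    eLpNorm (fun x => ∫ v, f (x - v) ∂γ) q ν ≤ eLpNorm f q ν := calc
  _ ≤ ∫⁻ v, eLpNorm (fun x => f (x - v)) q ν ∂γ :=
    eLpNorm_integral_le_lintegral_eLpNorm hq (hf.comp_measurable measurable_sub)
  _ = ∫⁻ _, eLpNorm f q ν ∂γ := lintegral_congr fun v =>
    eLpNorm_comp_measurePreserving hf.aestronglyMeasurable (measurePreserving_sub_right ν v)
  _ = eLpNorm f q ν := by simp

theorem eLpNorm_top_integral_sub_right_le [ν.IsAddLeftInvariant] [ν.IsNegInvariant]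
    [IsProbabilityMeasure γ] (hc : c ≠ 0) (hγ : γ ≤ c • ν) (hq : 1 ≤ q)
    (hf : StronglyMeasurable f) :
    eLpNorm (fun x => ∫ v, f (x - v) ∂γ) ∞ ν ≤ c ^ q⁻¹.toReal * eLpNorm f q ν := by
  rw [eLpNorm_exponent_top]
  refine essSup_le_of_ae_le _ (ae_of_all _ fun x => ?_)
  have hfx : StronglyMeasurable fun v => f (x - v) :=
    hf.comp_measurable (measurable_const.sub measurable_id)
  calc ‖∫ v, f (x - v) ∂γ‖ₑ ≤ ∫⁻ v, ‖f (x - v)‖ₑ ∂γ := enorm_integral_le_lintegral_enorm _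
    _ = eLpNorm (fun v => f (x - v)) 1 γ := eLpNorm_one_eq_lintegral_enorm.symm
    _ ≤ eLpNorm (fun v => f (x - v)) q γ :=
      eLpNorm_le_eLpNorm_of_exponent_le hq hfx.aestronglyMeasurable
    _ ≤ eLpNorm (fun v => f (x - v)) q (c • ν) := eLpNorm_mono_measure _ hγ
    _ = c ^ q⁻¹.toReal * eLpNorm (fun v => f (x - v)) q ν := by
      rw [eLpNorm_smul_measure_of_ne_zero hc, one_div, smul_eq_mul]
    _ = c ^ q⁻¹.toReal * eLpNorm f q ν := by
      congr 1
      exact eLpNorm_comp_measurePreserving hf.aestronglyMeasurable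
        (Measure.measurePreserving_sub_left ν x)

theorem toReal_inv_sub_inv (hq : q ≠ 0) (hqs : q ≤ s) :
    (q⁻¹ - s⁻¹).toReal = q⁻¹.toReal * (1 - q.toReal / s.toReal) := by
  have hq' : q⁻¹ ≠ ∞ := ENNReal.inv_ne_top.2 hq
  rw [ENNReal.toReal_sub_of_le (ENNReal.inv_le_inv.2 hqs) hq', ENNReal.toReal_inv,
    ENNReal.toReal_inv]
  rcases eq_or_ne q ∞ with rfl | hqt
  · simp [top_le_iff.1 hqs]
  · field_simp [(ENNReal.toReal_pos hq hqt).ne']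

theorem eLpNorm_integral_sub_right_le_rpow_mul [SFinite ν] [ν.IsAddLeftInvariant]
    [ν.IsNegInvariant] [IsProbabilityMeasure γ] (hc : c ≠ 0) (hγ : γ ≤ c • ν) (hq : 1 ≤ q)
    (hqs : q ≤ s) (hf : StronglyMeasurable f) :
    eLpNorm (fun x => ∫ v, f (x - v) ∂γ) s ν ≤ c ^ (q⁻¹ - s⁻¹).toReal * eLpNorm f q ν := by
  have hq0 : q ≠ 0 := (zero_lt_one.trans_le hq).ne'
  set θ := q.toReal / s.toReal with hθ
  have hθ0 : 0 ≤ θ := by positivity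
  have hθ1 : 0 ≤ 1 - θ := by
    rcases eq_or_ne s ∞ with rfl | hs
    · simp [hθ]
    · exact sub_nonneg.2 (div_le_one_of_le₀ (ENNReal.toReal_mono hs hqs) ENNReal.toReal_nonneg)
  have hmeas : AEStronglyMeasurable (fun x => ∫ v, f (x - v) ∂γ) ν :=
    (hf.comp_measurable measurable_sub).integral_prod_right'.aestronglyMeasurable
  calc _ ≤ _ := eLpNorm_le_eLpNorm_rpow_mul_eLpNorm_top_rpow hq0 hqs hmeas
    _ ≤ eLpNorm f q ν ^ θ * (c ^ q⁻¹.toReal * eLpNorm f q ν) ^ (1 - θ) := by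
      gcongr
      · exact eLpNorm_integral_sub_right_le hq hf
      · exact eLpNorm_top_integral_sub_right_le hc hγ hq hf
    _ = c ^ (q⁻¹ - s⁻¹).toReal * eLpNorm f q ν := by
      rw [toReal_inv_sub_inv hq0 hqs, ENNReal.rpow_mul, ENNReal.mul_rpow_of_nonneg _ _ hθ1,
        mul_left_comm, ← ENNReal.rpow_add_of_nonneg _ _ hθ0 hθ1, add_sub_cancel, ENNReal.rpow_one]

theorem eLpNorm_add_right_sub_self_le {E : Type*} [NormedAddCommGroup E] [NormedSpace ℝ E]
    [MeasurableSpace E] [BorelSpace E] [SecondCountableTopology E] {ν : Measure E} [SFinite ν]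
    [ν.IsAddRightInvariant] [CompleteSpace F] (hq : 1 ≤ q) {f : E → F} (hf : ContDiff ℝ 1 f)
    (w : E) :
    eLpNorm (fun v => f (v + w) - f v) q ν ≤ ‖w‖ₑ * eLpNorm (fderiv ℝ f) q ν := by
  have hf' : Continuous (fderiv ℝ f) := hf.continuous_fderiv one_ne_zero
  have hsegment (v : E) : f (v + w) - f v = ∫ s in Set.Ioc (0 : ℝ) 1, fderiv ℝ f (v + s • w) w := by
    have hderiv (s : ℝ) : HasDerivAt (fun s : ℝ => f (v + s • w)) (fderiv ℝ f (v + s • w) w) s := by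
      have hline : HasDerivAt (fun s : ℝ => v + s • w) w s := by
        simpa using ((hasDerivAt_id s).smul_const w).const_add v
      exact ((hf.differentiable one_ne_zero _).hasFDerivAt).comp_hasDerivAt s hline
    have hcont : Continuous fun s : ℝ => fderiv ℝ f (v + s • w) w := by fun_prop
    rw [← intervalIntegral.integral_of_le zero_le_one,
      intervalIntegral.integral_eq_sub_of_hasDerivAt (fun s _ => hderiv s)
        (hcont.intervalIntegrable _ _)]
    simp
  have hcont : Continuous (Function.uncurry fun v (s : ℝ) => fderiv ℝ f (v + s • w) w) := by
    unfold Function.uncurry; fun_prop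
  have hpoint (s : ℝ) : eLpNorm (fun v => fderiv ℝ f (v + s • w) w) q ν ≤
      ‖w‖ₑ * eLpNorm (fderiv ℝ f) q ν := calc
    _ ≤ ‖w‖ₑ * eLpNorm (fun v => fderiv ℝ f (v + s • w)) q ν := by
      simpa [ENNReal.smul_def, enorm_eq_nnnorm] using
        eLpNorm_le_nnreal_smul_eLpNorm_of_ae_le_mul (c := ‖w‖₊)
        (ae_of_all _ fun v => (mul_comm ‖w‖₊ _).symm ▸ (fderiv ℝ f (v + s • w)).le_opNNNorm w) q
    _ = ‖w‖ₑ * eLpNorm (fderiv ℝ f) q ν := by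
      congr 1
      exact eLpNorm_comp_measurePreserving hf'.aestronglyMeasurable
        (measurePreserving_add_right ν (s • w))
  simp only [hsegment]
  calc _ ≤ _ := eLpNorm_integral_le_lintegral_eLpNorm hq hcont.stronglyMeasurable
    _ ≤ ∫⁻ _ in Set.Ioc (0 : ℝ) 1, ‖w‖ₑ * eLpNorm (fderiv ℝ f) q ν := lintegral_mono hpoint
    _ = ‖w‖ₑ * eLpNorm (fderiv ℝ f) q ν := by simp

end Translation

section Gamma

open ProbabilityTheory

variable {a r : ℝ}

theorem lintegral_gammaMeasure {f : ℝ → ℝ≥0∞} (hf : Measurable f) :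
    ∫⁻ t, f t ∂gammaMeasure a r = ∫⁻ t, gammaPDF a r t * f t :=
  lintegral_withDensity_eq_lintegral_mul _ (measurable_gammaPDFReal a r).ennreal_ofReal hf

theorem ae_pos_gammaMeasure (a r : ℝ) : ∀ᵐ t ∂gammaMeasure a r, 0 < t := by
  have hpdf : Measurable (gammaPDF a r) := (measurable_gammaPDFReal a r).ennreal_ofReal
  rw [gammaMeasure, ae_withDensity_iff hpdf]
  filter_upwards [Measure.ae_ne volume (0 : ℝ)] with t ht0 htpdf
  exact (not_lt.1 fun htneg => htpdf (gammaPDF_of_neg htneg)).lt_of_ne' ht0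

theorem lintegral_exp_neg_mul_gammaMeasure (ha : 0 < a) (hr : 0 < r) {s : ℝ} (hs : 0 ≤ s) :
    ∫⁻ t, ENNReal.ofReal (rexp (-(s * t))) ∂gammaMeasure a r =
      ENNReal.ofReal ((r / (r + s)) ^ a) := by
  have htilt (t : ℝ) : gammaPDF a r t * ENNReal.ofReal (rexp (-(s * t))) =
      ENNReal.ofReal ((r / (r + s)) ^ a) * gammaPDF a (r + s) t := by
    rcases lt_or_ge t 0 with ht | ht
    · simp [gammaPDF_of_neg ht]
    · have hG := (Real.Gamma_pos_of_pos ha).ne'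
      rw [gammaPDF_of_nonneg ht, gammaPDF_of_nonneg ht, ← ENNReal.ofReal_mul (by positivity),
        ← ENNReal.ofReal_mul (by positivity), Real.div_rpow hr.le (by positivity), add_mul, neg_add,
        Real.exp_add]
      congr 1
      field_simp [hG]
  rw [lintegral_gammaMeasure (by fun_prop), lintegral_congr htilt,
    lintegral_const_mul' _ _ ENNReal.ofReal_ne_top,
    lintegral_gammaPDF_eq_one ha (by positivity), mul_one]

theorem lintegral_rpow_neg_gammaMeasure_lt_top (ha : 0 < a) (hr : 0 < r) {κ : ℝ} (hκ : κ < a) :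
    ∫⁻ t, ENNReal.ofReal (t ^ (-κ)) ∂gammaMeasure a r < ∞ := by
  set c := r ^ κ * Real.Gamma (a - κ) / Real.Gamma a with hc
  have hGκ := Real.Gamma_pos_of_pos (sub_pos.2 hκ)
  have hG := (Real.Gamma_pos_of_pos ha).ne'
  have hshift (t : ℝ) (ht : t ≠ 0) : gammaPDF a r t * ENNReal.ofReal (t ^ (-κ)) =
      ENNReal.ofReal c * gammaPDF (a - κ) r t := by
    rcases ht.lt_or_gt with ht | ht
    · simp [gammaPDF_of_neg ht]
    · rw [gammaPDF_of_nonneg ht.le, gammaPDF_of_nonneg ht.le, ← ENNReal.ofReal_mul (by positivity),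
        ← ENNReal.ofReal_mul (by positivity), hc, show a - κ - 1 = a - 1 + -κ by ring,
        Real.rpow_sub hr, Real.rpow_add ht]
      congr 1
      field_simp [hG]
  rw [lintegral_gammaMeasure (by fun_prop),
    lintegral_congr_ae ((Measure.ae_ne volume (0 : ℝ)).mono hshift),
    lintegral_const_mul' _ _ ENNReal.ofReal_ne_top,
    lintegral_gammaPDF_eq_one (sub_pos.2 hκ) hr, mul_one]
  exact ENNReal.ofReal_lt_top

theorem integral_exp_neg_pi_mul_gammaMeasure {β : ℝ} (hβ : 0 < β) {s : ℝ} (hs : 0 ≤ s) :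
    ∫ t, rexp (-(π * s * t)) ∂gammaMeasure (β / 2) π = (1 + s) ^ (-β / 2) := by
  rw [integral_eq_lintegral_of_nonneg_ae (ae_of_all _ fun t => (Real.exp_pos _).le) (by fun_prop),
    lintegral_exp_neg_mul_gammaMeasure (half_pos hβ) pi_pos (by positivity),
    ENNReal.toReal_ofReal (by positivity)]
  rw [neg_div, Real.rpow_neg (by positivity), ← Real.inv_rpow (by positivity)]
  congr 1
  field_simp

end Gamma

section Heat

open Module

open scoped SchwartzMap

variable {E : Type*} [NormedAddCommGroup E] [InnerProductSpace ℝ E] {q s : ℝ≥0∞} {t : ℝ}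

/-- The heat kernel at time `t`, normalised so that it has mass `1` and Fourier transform
`e^{-πt‖ξ‖²}`. -/
noncomputable def heatKernel (t : ℝ) (v : E) : ℝ :=
  t ^ (-(finrank ℝ E : ℝ) / 2) * rexp (-(π / t) * ‖v‖ ^ 2)

theorem contDiff_heatKernel {k : WithTop ℕ∞} : ContDiff ℝ k (heatKernel t : E → ℝ) := by
  have := contDiff_norm_sq ℝ (E := E) (n := k)
  unfold heatKernel
  fun_prop

theorem heatKernel_nonneg (ht : 0 ≤ t) (v : E) : 0 ≤ heatKernel t v := by
  unfold heatKernel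
  positivity

theorem heatKernel_le (ht : 0 ≤ t) (v : E) : heatKernel t v ≤ t ^ (-(finrank ℝ E : ℝ) / 2) := by
  refine mul_le_of_le_one_right (by positivity) (Real.exp_le_one_iff.2 ?_)
  rw [neg_mul]
  exact neg_nonpos.2 (by positivity)

variable [MeasurableSpace E] [BorelSpace E]

theorem measurable_heatKernel : Measurable (Function.uncurry (heatKernel : ℝ → E → ℝ)) := by
  unfold Function.uncurry heatKernel
  fun_prop

variable [FiniteDimensional ℝ E]

/-- The heat semigroup: convolution with the heat kernel at time `t`. -/
noncomputable def heatFlow (t : ℝ) (f : E → ℂ) (x : E) : ℂ :=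
  ∫ v, heatKernel t v • f (x - v)

theorem integral_heatKernel (ht : 0 < t) : ∫ v : E, heatKernel t v = 1 := by
  simp only [heatKernel]
  rw [integral_const_mul, GaussianFourier.integral_rexp_neg_mul_sq_norm (by positivity),
    div_div_cancel₀ pi_ne_zero, ← Real.rpow_add ht, neg_div, neg_add_cancel, Real.rpow_zero]

theorem integrable_heatKernel (ht : 0 < t) : Integrable (heatKernel t : E → ℝ) :=
  .of_integral_ne_zero ((integral_heatKernel ht).trans_ne one_ne_zero)

theorem fourier_heatKernel (ht : 0 < t) (ξ : E) :
    𝓕 (fun v : E => (heatKernel t v : ℂ)) ξ = rexp (-(π * ‖ξ‖ ^ 2 * t)) := by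
  have hre : 0 < ((π / t : ℝ) : ℂ).re := by rw [ofReal_re]; positivity
  have hgauss := fourier_gaussian_innerProductSpace hre ξ
  have hsplit : (fun v : E => (heatKernel t v : ℂ)) = fun v : E =>
      ((t ^ (-(finrank ℝ E : ℝ) / 2) : ℝ) : ℂ) • cexp (-((π / t : ℝ) : ℂ) * ‖v‖ ^ 2) := by
    ext v
    simp [heatKernel]
  have hpow : (π / (π / t : ℝ) : ℂ) ^ (finrank ℝ E / 2 : ℂ) =
      ((t ^ (finrank ℝ E / 2 : ℝ) : ℝ) : ℂ) := by
    rw [← ofReal_div, div_div_cancel₀ pi_ne_zero, Complex.ofReal_cpow ht.le]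
    simp
  have hexp : (-(π : ℂ) ^ 2 * ‖ξ‖ ^ 2 / (π / t : ℝ) : ℂ) = (-(π * ‖ξ‖ ^ 2 * t) : ℝ) := by
    have hπ : (π : ℂ) ≠ 0 := by exact_mod_cast pi_ne_zero
    push_cast
    field_simp
  rw [hsplit, Real.fourier_eq]
  simp only [smul_comm _ (((t ^ (-(finrank ℝ E : ℝ) / 2) : ℝ) : ℂ))]
  rw [integral_smul, ← Real.fourier_eq, hgauss, hpow, hexp, ← ofReal_exp, smul_eq_mul, ← mul_assoc,
    ← ofReal_mul, ← Real.rpow_add ht, neg_div, neg_add_cancel, Real.rpow_zero, ofReal_one, one_mul]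

/-- The heat kernel at time `t`, as a measure; it is a probability measure for `t > 0`. -/
noncomputable def heatMeasure (E : Type*) [NormedAddCommGroup E] [InnerProductSpace ℝ E]
    [MeasurableSpace E] [BorelSpace E] [FiniteDimensional ℝ E] (t : ℝ) : Measure E :=
  volume.withDensity fun v => ENNReal.ofReal (heatKernel t v)

theorem isProbabilityMeasure_heatMeasure (ht : 0 < t) :
    IsProbabilityMeasure (heatMeasure E t) where
  measure_univ := by
    rw [heatMeasure, withDensity_apply _ .univ, Measure.restrict_univ,
      ← ofReal_integral_eq_lintegral_ofReal (integrable_heatKernel ht)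
        (ae_of_all _ (heatKernel_nonneg ht.le)), integral_heatKernel ht, ENNReal.ofReal_one]

theorem heatMeasure_le (ht : 0 ≤ t) :
    heatMeasure E t ≤ ENNReal.ofReal (t ^ (-(finrank ℝ E : ℝ) / 2)) • volume := by
  rw [← withDensity_const]
  exact withDensity_mono (ae_of_all _ fun v => ENNReal.ofReal_le_ofReal (heatKernel_le ht v))

theorem integral_heatMeasure (ht : 0 ≤ t) (g : E → ℂ) :
    ∫ v, g v ∂heatMeasure E t = ∫ v, heatKernel t v • g v := by
  have hmeas : Measurable fun v : E => ENNReal.ofReal (heatKernel t v) :=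
    (contDiff_heatKernel (k := 0)).continuous.measurable.ennreal_ofReal
  rw [heatMeasure, integral_withDensity_eq_integral_toReal_smul hmeas (by simp)]
  simp only [ENNReal.toReal_ofReal (heatKernel_nonneg ht _)]

theorem eLpNorm_heatFlow_le (ht : 0 < t) (hq : 1 ≤ q) (hqs : q ≤ s) {f : E → ℂ}
    (hf : StronglyMeasurable f) :
    eLpNorm (heatFlow t f) s volume ≤
      ENNReal.ofReal (t ^ (-(finrank ℝ E * (q⁻¹ - s⁻¹).toReal) / 2)) * eLpNorm f q volume := by
  have := isProbabilityMeasure_heatMeasure (E := E) ht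
  have hflow : heatFlow t f = fun x => ∫ v, f (x - v) ∂heatMeasure E t :=
    funext fun x => (integral_heatMeasure ht.le _).symm
  have hc : ENNReal.ofReal (t ^ (-(finrank ℝ E : ℝ) / 2)) ≠ 0 := by
    rw [ENNReal.ofReal_ne_zero_iff]; positivity
  rw [hflow]
  refine (eLpNorm_integral_sub_right_le_rpow_mul hc (heatMeasure_le ht.le) hq hqs hf).trans_eq ?_
  rw [ENNReal.ofReal_rpow_of_pos (by positivity), ← Real.rpow_mul ht.le]
  congr 3
  ring

end Heat

section HeatDifference

open Module

open scoped SchwartzMap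

variable {E : Type*} [NormedAddCommGroup E] [InnerProductSpace ℝ E]

theorem two_mul_mul_exp_neg_sq_le {b : ℝ} (hb : 0 ≤ b) (r : ℝ) :
    2 * b * r * rexp (-b * r ^ 2) ≤ 2 * √b * rexp (-(b / 2) * r ^ 2) := by
  have hroot : √b ^ 2 = b := Real.sq_sqrt hb
  have hlin : √b * r ≤ rexp (b / 2 * r ^ 2) := calc
    √b * r ≤ b / 2 * r ^ 2 + 1 := by nlinarith [sq_nonneg (√b * r - 1)]
    _ ≤ rexp (b / 2 * r ^ 2) := Real.add_one_le_exp _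
  calc 2 * b * r * rexp (-b * r ^ 2) = 2 * √b * (√b * r) * rexp (-b * r ^ 2) := by
        nth_rewrite 1 [← hroot]; ring
    _ ≤ 2 * √b * rexp (b / 2 * r ^ 2) * rexp (-b * r ^ 2) := by gcongr
    _ = 2 * √b * rexp (-(b / 2) * r ^ 2) := by
        rw [mul_assoc, ← Real.exp_add]; congr 2; ring

theorem hasFDerivAt_heatKernel (t : ℝ) (v : E) :
    HasFDerivAt (heatKernel t) ((heatKernel t v * (-(π / t) * 2)) • innerSL ℝ v) v := by
  have hsq := ((hasStrictFDerivAt_norm_sq v).hasFDerivAt.const_mul (-(π / t))).exp.const_mul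
    (t ^ (-(finrank ℝ E : ℝ) / 2))
  refine hsq.congr_fderiv ?_
  ext w
  simp [heatKernel]
  ring

theorem norm_fderiv_heatKernel_le {t : ℝ} (ht : 0 < t) (v : E) :
    ‖fderiv ℝ (heatKernel t) v‖ ≤
      2 * √π * 2 ^ (finrank ℝ E / 2 : ℝ) * t ^ (-(1 / 2) : ℝ) * heatKernel (2 * t) v := by
  have hdil : 2 ^ (finrank ℝ E / 2 : ℝ) * (2 * t) ^ (-(finrank ℝ E : ℝ) / 2) =
      t ^ (-(finrank ℝ E : ℝ) / 2) := by
    rw [Real.mul_rpow two_pos.le ht.le, ← mul_assoc, ← Real.rpow_add two_pos, neg_div,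
      add_neg_cancel, Real.rpow_zero, one_mul]
  have hsqrt : √(π / t) = √π * t ^ (-(1 / 2) : ℝ) := by
    rw [Real.sqrt_div' _ ht.le, Real.rpow_neg ht.le, ← Real.sqrt_eq_rpow, div_eq_mul_inv]
  rw [(hasFDerivAt_heatKernel t v).fderiv, norm_smul, innerSL_apply_norm, norm_mul, norm_mul,
    norm_neg, Real.norm_of_nonneg (heatKernel_nonneg ht.le v),
    Real.norm_of_nonneg (by positivity : 0 ≤ π / t), Real.norm_two]
  calc heatKernel t v * (π / t * 2) * ‖v‖
      = t ^ (-(finrank ℝ E : ℝ) / 2) *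
          (2 * (π / t) * ‖v‖ * rexp (-(π / t) * ‖v‖ ^ 2)) := by rw [heatKernel]; ring
    _ ≤ t ^ (-(finrank ℝ E : ℝ) / 2) * (2 * √(π / t) * rexp (-(π / t / 2) * ‖v‖ ^ 2)) := by
        gcongr _ * ?_
        exact two_mul_mul_exp_neg_sq_le (by positivity) _
    _ = _ := by
        rw [heatKernel, hsqrt, ← hdil, div_div, mul_comm t 2]
        ring

variable [MeasurableSpace E] [BorelSpace E] [FiniteDimensional ℝ E] {q : ℝ≥0∞} {t : ℝ}

theorem eLpNorm_fderiv_heatKernel_le (ht : 0 < t) :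
    eLpNorm (fderiv ℝ (heatKernel t : E → ℝ)) 1 volume ≤
      ENNReal.ofReal (2 * √π * 2 ^ (finrank ℝ E / 2 : ℝ) * t ^ (-(1 / 2) : ℝ)) := by
  have hmass : eLpNorm (heatKernel (2 * t) : E → ℝ) 1 volume = 1 := by
    rw [eLpNorm_one_eq_lintegral_enorm,
      ← ofReal_integral_norm_eq_lintegral_enorm (integrable_heatKernel (by positivity)),
      integral_congr_ae (ae_of_all _ fun v =>
        Real.norm_of_nonneg (heatKernel_nonneg (by positivity) v)),
      integral_heatKernel (by positivity), ENNReal.ofReal_one]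
  refine (eLpNorm_le_mul_eLpNorm_of_ae_le_mul (ae_of_all _ fun v => ?_) 1).trans_eq
    (by rw [hmass, mul_one])
  rw [Real.norm_of_nonneg (heatKernel_nonneg (by positivity) v)]
  exact norm_fderiv_heatKernel_le ht v

theorem integrable_heatKernel_smul (ht : 0 < t) (f : 𝓢(E, ℂ)) (w x : E) :
    Integrable fun v => heatKernel t (v + w) • f (x - v) :=
  ((integrable_heatKernel ht).comp_add_right w).smul_bdd _ (by fun_prop)
    (ae_of_all _ fun v => f.norm_le_seminorm ℝ _)

theorem heatFlow_add_right_sub_self (ht : 0 < t) (f : 𝓢(E, ℂ)) (w x : E) :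
    heatFlow t (fun y => f (y + w) - f y) x =
      ∫ v, (heatKernel t (v + w) - heatKernel t v) • f (x - v) := by
  have hint (y : E) : Integrable fun v => heatKernel t v • f (y - v) := by
    simpa using integrable_heatKernel_smul ht f 0 y
  have hintw : Integrable fun v => heatKernel t v • f (x - v + w) := by
    simpa only [sub_add_eq_add_sub] using hint (x + w)
  have htrans : ∫ v, heatKernel t v • f (x - v + w) = ∫ v, heatKernel t (v + w) • f (x - v) := by
    rw [← integral_add_right_eq_self _ w]
    simp only [sub_add_eq_sub_sub, sub_add_cancel]
  simp only [heatFlow, smul_sub, sub_smul]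
  rw [integral_sub hintw (hint x),
    integral_sub (integrable_heatKernel_smul ht f w x) (hint x), htrans]

theorem eLpNorm_heatFlow_add_right_sub_self_le (ht : 0 < t) (hq : 1 ≤ q) (f : 𝓢(E, ℂ)) (w : E) :
    eLpNorm (heatFlow t fun y => f (y + w) - f y) q volume ≤
      ENNReal.ofReal (2 * √π * 2 ^ (finrank ℝ E / 2 : ℝ) * (‖w‖ * t ^ (-(1 / 2) : ℝ))) *
        eLpNorm f q volume := by
  have hH : Continuous (heatKernel t : E → ℝ) := (contDiff_heatKernel (k := 0)).continuous
  have hcont : Continuous (Function.uncurry fun x v =>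
      (heatKernel t (v + w) - heatKernel t v) • f (x - v)) := by
    unfold Function.uncurry; fun_prop
  have hslice (v : E) : eLpNorm (fun x => (heatKernel t (v + w) - heatKernel t v) • f (x - v)) q
      volume = ‖heatKernel t (v + w) - heatKernel t v‖ₑ * eLpNorm f q volume := by
    rw [← eLpNorm_comp_measurePreserving f.continuous.aestronglyMeasurable
      (measurePreserving_sub_right volume v), ← eLpNorm_const_smul]
    rfl
  rw [funext (heatFlow_add_right_sub_self ht f w)]
  calc _ ≤ _ := eLpNorm_integral_le_lintegral_eLpNorm hq hcont.stronglyMeasurable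
    _ = eLpNorm (fun v => heatKernel t (v + w) - heatKernel t v) 1 volume *
        eLpNorm f q volume := by
      rw [lintegral_congr hslice, lintegral_mul_const _ (by fun_prop),
        eLpNorm_one_eq_lintegral_enorm]
    _ ≤ ‖w‖ₑ * eLpNorm (fderiv ℝ (heatKernel t : E → ℝ)) 1 volume * eLpNorm f q volume := by
      gcongr
      exact eLpNorm_add_right_sub_self_le le_rfl contDiff_heatKernel w
    _ ≤ _ := by
      rw [mul_left_comm _ ‖w‖, ENNReal.ofReal_mul (norm_nonneg w), ofReal_norm]
      gcongr
      exact eLpNorm_fderiv_heatKernel_le ht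

end HeatDifference

section Bessel

open Module ProbabilityTheory

open scoped SchwartzMap

variable {E : Type*} [NormedAddCommGroup E] [InnerProductSpace ℝ E]

theorem norm_exp_neg_mul_smul_le {r t : ℝ} (hr : 0 ≤ r) (ht : 0 ≤ t) (z : ℂ) :
    ‖rexp (-(r * t)) • z‖ ≤ ‖z‖ := by
  rw [norm_smul, Real.norm_of_nonneg (by positivity)]
  exact mul_le_of_le_one_left (norm_nonneg z) (Real.exp_le_one_iff.2 (neg_nonpos.2 (by positivity)))

theorem hasTemperateGrowth_besselSymbol (s : ℝ) :
    (fun ξ : E => (((1 + ‖ξ‖ ^ 2) ^ (s / 2) : ℝ) : ℂ)).HasTemperateGrowth := by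
  fun_prop

variable [MeasurableSpace E] [BorelSpace E] [FiniteDimensional ℝ E] {q s : ℝ≥0∞} {t β : ℝ}

theorem integrable_fourier (f : 𝓢(E, ℂ)) : Integrable (𝓕 (f : E → ℂ)) := by
  rw [← SchwartzMap.fourier_coe]
  exact (𝓕 f).integrable

theorem integral_mul_sub_eq_fourierInv {K : E → ℂ} (hK : Integrable K) (f : 𝓢(E, ℂ)) (x : E) :
    ∫ v, K v * f (x - v) = 𝓕⁻ (fun ξ => 𝓕 K ξ * 𝓕 (f : E → ℂ) ξ) x := by
  set g : E → ℂ := fun ξ => 𝐞 (inner ℝ ξ x) • 𝓕 (f : E → ℂ) ξ with hg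
  have hgint : Integrable g := by
    simpa [hg] using (Real.fourierIntegral_convergent_iff (-x)).2 (integrable_fourier f)
  have htrans (v : E) : 𝓕 g v = f (x - v) := by
    rw [← f.continuous.fourierInv_fourier_eq f.integrable (integrable_fourier f),
      Real.fourierInv_eq, Real.fourier_eq]
    simp only [hg, smul_smul, ← AddChar.map_add_eq_mul, inner_sub_right, neg_add_eq_sub]
  have hflip : ∫ ξ, 𝓕 K ξ • g ξ = ∫ v, K v • 𝓕 g v := by
    simpa using! VectorFourier.integral_fourierIntegral_smul_eq_flip (L := innerₗ E)
      Real.continuous_fourierChar continuous_inner hK hgint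
  simp only [smul_eq_mul, htrans] at hflip
  rw [← hflip, Real.fourierInv_eq]
  simp only [hg, mul_smul_comm]

theorem heatFlow_eq_fourierInv (ht : 0 < t) (f : 𝓢(E, ℂ)) (x : E) :
    heatFlow t f x = 𝓕⁻ (fun ξ => rexp (-(π * ‖ξ‖ ^ 2 * t)) • 𝓕 (f : E → ℂ) ξ) x := by
  simp only [heatFlow, Complex.real_smul]
  rw [integral_mul_sub_eq_fourierInv (K := fun v => (heatKernel t v : ℂ))
    (integrable_heatKernel ht).ofReal]
  simp only [fourier_heatKernel ht]

/-- The Bessel potential operator `(1 - Δ)^{s/2}` on Schwartz functions. -/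
noncomputable def besselCLM (s : ℝ) : 𝓢(E, ℂ) →L[ℂ] 𝓢(E, ℂ) :=
  SchwartzMap.fourierMultiplierCLM ℂ fun ξ => (((1 + ‖ξ‖ ^ 2) ^ (s / 2) : ℝ) : ℂ)

theorem coe_besselCLM (s : ℝ) (f : 𝓢(E, ℂ)) : ⇑(besselCLM s f) =
    𝓕⁻ fun ξ : E => (((1 + ‖ξ‖ ^ 2) ^ (s / 2) : ℝ) : ℂ) * 𝓕 (f : E → ℂ) ξ := by
  rw [besselCLM, SchwartzMap.fourierMultiplierCLM_apply, SchwartzMap.fourierInv_coe,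
    SchwartzMap.smulLeftCLM_apply (hasTemperateGrowth_besselSymbol s), SchwartzMap.fourier_coe]
  rfl

theorem besselCLM_add (s t : ℝ) :
    besselCLM (E := E) (s + t) = besselCLM s * besselCLM t := by
  have hpow (ξ : E) : (1 + ‖ξ‖ ^ 2) ^ ((s + t) / 2) =
      (1 + ‖ξ‖ ^ 2) ^ (s / 2) * (1 + ‖ξ‖ ^ 2) ^ (t / 2) := by
    rw [← Real.rpow_add (by positivity), add_div]
  ext1 f
  rw [mul_apply_eq_comp, besselCLM, besselCLM, besselCLM,
    SchwartzMap.fourierMultiplierCLM_fourierMultiplierCLM_apply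
    (hasTemperateGrowth_besselSymbol s) (hasTemperateGrowth_besselSymbol t)]
  simp only [Pi.mul_def, ← ofReal_mul, hpow]

theorem besselCLM_zero : besselCLM (E := E) 0 = 1 := by
  ext1 f
  simp [besselCLM]

theorem besselCLM_nsmul (m : ℕ) (s : ℝ) :
    besselCLM (E := E) (m • s) = besselCLM s ^ m := by
  induction m with
  | zero => rw [zero_smul, besselCLM_zero, pow_zero]
  | succ m ih => rw [succ_nsmul, besselCLM_add, ih, pow_succ]

theorem besselCLM_neg_apply (hβ : 0 < β) (f : 𝓢(E, ℂ)) (x : E) :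
    besselCLM (-β) f x = ∫ t, heatFlow t f x ∂gammaMeasure (β / 2) π := by
  have := isProbabilityMeasure_gammaMeasure (half_pos hβ) pi_pos
  set μ := gammaMeasure (β / 2) π
  set F : ℝ → E → ℂ := fun t ξ =>
    𝐞 (inner ℝ ξ x) • rexp (-(π * ‖ξ‖ ^ 2 * t)) • 𝓕 (f : E → ℂ) ξ with hF
  have hcont : Continuous (𝓕 (f : E → ℂ)) := by
    rw [← SchwartzMap.fourier_coe]; exact (𝓕 f).continuous
  have hint : Integrable (Function.uncurry F) (μ.prod volume) := by
    refine ((integrable_fourier f).comp_snd μ).mono (Continuous.aestronglyMeasurable ?_) ?_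
    · simp only [hF, Function.uncurry_def]
      fun_prop
    · filter_upwards [Measure.quasiMeasurePreserving_fst.ae (ae_pos_gammaMeasure (β / 2) π)]
        with z hz
      rw [Function.uncurry_def, hF, Circle.norm_smul]
      exact norm_exp_neg_mul_smul_le (by positivity) hz.le _
  calc besselCLM (-β) f x
      = ∫ ξ, ∫ t, F t ξ ∂μ := by
        rw [coe_besselCLM, Real.fourierInv_eq]
        refine integral_congr_ae (ae_of_all _ fun ξ => ?_)
        simp only [hF, Circle.smul_def, integral_smul, integral_smul_const]
        rw [integral_exp_neg_pi_mul_gammaMeasure hβ (sq_nonneg ‖ξ‖), Complex.real_smul]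
    _ = ∫ t, ∫ ξ, F t ξ ∂volume ∂μ := (integral_integral_swap hint).symm
    _ = ∫ t, heatFlow t f x ∂μ := by
        refine integral_congr_ae ((ae_pos_gammaMeasure (β / 2) π).mono fun t ht => ?_)
        simp only [heatFlow_eq_fourierInv ht f x, Real.fourierInv_eq, hF]

theorem stronglyMeasurable_heatFlow {f : E → ℂ} (hf : Measurable f) :
    StronglyMeasurable (Function.uncurry fun x t => heatFlow t f x) := by
  have hmeas : Measurable fun z : (E × ℝ) × E => heatKernel z.1.2 z.2 • f (z.1.1 - z.2) :=
    (measurable_heatKernel.comp (by fun_prop : Measurable fun z : (E × ℝ) × E => (z.1.2, z.2))).smul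
      (by fun_prop)
  exact hmeas.stronglyMeasurable.integral_prod_right'

/-- **Subordination principle**: a power bound on the heat flow at all times passes to the Bessel
potential. -/
theorem exists_eLpNorm_besselCLM_neg_le (hβ : 0 < β) {κ : ℝ} (hκ : κ < β / 2) :
    ∃ C : ℝ≥0∞, C ≠ ∞ ∧ ∀ (s : ℝ≥0∞) (f : 𝓢(E, ℂ)) (B : ℝ≥0∞), 1 ≤ s →
      (∀ t > 0, eLpNorm (heatFlow t f) s volume ≤ ENNReal.ofReal (t ^ (-κ)) * B) →
      eLpNorm (besselCLM (-β) f) s volume ≤ C * B := by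
  have := isProbabilityMeasure_gammaMeasure (half_pos hβ) pi_pos
  refine ⟨_, (lintegral_rpow_neg_gammaMeasure_lt_top (half_pos hβ) pi_pos hκ).ne,
    fun s f B hs hB => ?_⟩
  rw [funext (besselCLM_neg_apply hβ f), ← lintegral_mul_const _ (by fun_prop)]
  exact (eLpNorm_integral_le_lintegral_eLpNorm hs
    (stronglyMeasurable_heatFlow f.continuous.measurable)).trans
    (lintegral_mono_ae ((ae_pos_gammaMeasure (β / 2) π).mono hB))

theorem exists_eLpNorm_besselCLM_neg_le_of_le (hq : 1 ≤ q) (hqs : q ≤ s)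
    (hβ : finrank ℝ E * (q⁻¹ - s⁻¹).toReal < β) :
    ∃ C : ℝ≥0∞, C ≠ ∞ ∧ ∀ f : 𝓢(E, ℂ),
      eLpNorm (besselCLM (-β) f) s volume ≤ C * eLpNorm f q volume := by
  have hβ0 : 0 < β := lt_of_le_of_lt (by positivity) hβ
  obtain ⟨C, hC, hsub⟩ := exists_eLpNorm_besselCLM_neg_le (E := E) hβ0
    (div_lt_div_of_pos_right hβ two_pos)
  refine ⟨C, hC, fun f => hsub s f _ (hq.trans hqs) fun t ht => ?_⟩
  rw [← neg_div]
  exact eLpNorm_heatFlow_le ht hq hqs f.continuous.stronglyMeasurable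

end Bessel

section TwistedShift

open scoped SchwartzMap NNReal

/-- The norm truncated at height `1`. Powers of it measure the vanishing order of a family of
operators at the origin of the parameter space, while keeping the family bounded at infinity. -/
noncomputable def truncNorm {F : Type*} [NormedAddCommGroup F] (W : F) : ℝ≥0 := min 1 ‖W‖₊

theorem truncNorm_le_one {F : Type*} [NormedAddCommGroup F] (W : F) : truncNorm W ≤ 1 :=
  min_le_left _ _

theorem norm_fourierChar_sub_one_le {F : Type*} [NormedAddCommGroup F] {θ : ℝ} {W : F}
    (h : |θ| ≤ ‖W‖) : ‖(𝐞 θ : ℂ) - 1‖ ≤ 2 * π * truncNorm W := by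
  rw [truncNorm, NNReal.coe_min, NNReal.coe_one, coe_nnnorm, mul_min_of_nonneg _ _ (by positivity),
    mul_one, le_min_iff]
  constructor
  · calc ‖(𝐞 θ : ℂ) - 1‖ ≤ ‖(𝐞 θ : ℂ)‖ + ‖(1 : ℂ)‖ := norm_sub_le _ _
      _ = 2 := by rw [Circle.norm_coe, norm_one, one_add_one_eq_two]
      _ ≤ 2 * π := by linarith [pi_gt_three]
  · calc ‖(𝐞 θ : ℂ) - 1‖ ≤ ‖2 * π * θ‖ := by
          rw [Real.fourierChar_apply, mul_comm]
          exact norm_exp_I_mul_ofReal_sub_one_le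
      _ = 2 * π * |θ| := by rw [norm_mul, Real.norm_of_nonneg (by positivity), Real.norm_eq_abs]
      _ ≤ 2 * π * ‖W‖ := by gcongr

/-- The parameter space `ℝ × E` with its Euclidean norm. The symbol `(1 + ‖ξ‖²)^{α/2}` is the
homogeneous function `‖·‖^α` restricted to the affine hyperplane `{1} × E` of this space. -/
abbrev Lift (E : Type*) := WithLp 2 (ℝ × E)

namespace Lift

variable {E : Type*} [NormedAddCommGroup E]

/-- The frequency `ξ` as the point `(1, ξ)` of the hyperplane `{1} × E`. -/
def ofFreq (ξ : E) : Lift E := WithLp.toLp 2 (1, ξ)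

/-- The point `W` with its scalar component replaced by `0`. -/
def untwist (W : Lift E) : Lift E := WithLp.toLp 2 (0, W.snd)

theorem norm_sq_ofFreq (ξ : E) : ‖ofFreq ξ‖ ^ 2 = 1 + ‖ξ‖ ^ 2 := by
  simp [ofFreq, WithLp.prod_norm_sq_eq_of_L2]

theorem norm_ofFreq_zero : ‖ofFreq (0 : E)‖ = 1 := by
  simpa using (pow_eq_one_iff_of_nonneg (norm_nonneg _) two_ne_zero).1
    (by simp [norm_sq_ofFreq] : ‖ofFreq (0 : E)‖ ^ 2 = 1)

theorem norm_untwist_le [NormedSpace ℝ E] (W : Lift E) : ‖untwist W‖ ≤ ‖W‖ := by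
  rw [← sq_le_sq₀ (norm_nonneg _) (norm_nonneg _), WithLp.prod_norm_sq_eq_of_L2,
    WithLp.prod_norm_sq_eq_of_L2]
  simp [untwist, sq_nonneg]

theorem inner_ofFreq [InnerProductSpace ℝ E] (W : Lift E) (ξ : E) :
    inner ℝ W (ofFreq ξ) = W.fst + inner ℝ W.snd ξ := by
  simp [ofFreq, WithLp.prod_inner_apply]

end Lift

open Lift

variable {E : Type*} [NormedAddCommGroup E] [InnerProductSpace ℝ E] {q : ℝ≥0∞}

/-- The twisted translation `f ↦ 𝐞(θ) f(· + w)` attached to `W = (θ, w)`, which multiplies the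
Fourier transform at `ξ` by the character `𝐞 ⟪W, (1, ξ)⟫`. -/
noncomputable def twistShift (W : Lift E) : 𝓢(E, ℂ) →L[ℂ] 𝓢(E, ℂ) :=
  (𝐞 W.fst : ℂ) • SchwartzMap.compSubConstCLM ℂ (-W.snd)

theorem twistShift_apply (W : Lift E) (f : 𝓢(E, ℂ)) (x : E) :
    twistShift W f x = 𝐞 W.fst * f (x + W.snd) := by
  simp [twistShift, SchwartzMap.compSubConstCLM_apply]

theorem twistShift_zero : twistShift (0 : Lift E) = 1 := by
  ext f x
  simp [twistShift_apply]

theorem twistShift_add (W W' : Lift E) : twistShift (W + W') = twistShift W * twistShift W' := by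
  ext f x
  simp only [twistShift_apply, mul_apply_eq_comp, WithLp.add_fst, WithLp.add_snd,
    AddChar.map_add_eq_mul, Circle.coe_mul, mul_assoc, add_assoc]

theorem twistShift_nsmul (m : ℕ) (W : Lift E) : twistShift (m • W) = twistShift W ^ m := by
  induction m with
  | zero => rw [zero_smul, twistShift_zero, pow_zero]
  | succ m ih => rw [succ_nsmul, twistShift_add, ih, pow_succ]

theorem commute_twistShift (W W' : Lift E) : Commute (twistShift W) (twistShift W') := by
  rw [commute_iff_eq, ← twistShift_add, ← twistShift_add, add_comm]

theorem twistShift_eq_smul_untwist (W : Lift E) :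
    twistShift W = (𝐞 W.fst : ℂ) • twistShift (untwist W) := by
  ext f x
  simp [twistShift_apply, untwist]

/-- The twisted difference `f ↦ 𝐞(θ) f(· + w) - f`, an ordinary difference when `θ = 0`. -/
noncomputable def twistDiff (W : Lift E) : 𝓢(E, ℂ) →L[ℂ] 𝓢(E, ℂ) := twistShift W - 1

theorem twistDiff_sub_twistDiff_untwist (W : Lift E) :
    twistDiff W - twistDiff (untwist W) = ((𝐞 W.fst : ℂ) - 1) • twistShift (untwist W) := by
  rw [twistDiff, twistDiff, twistShift_eq_smul_untwist, sub_sub_sub_cancel_right, sub_smul,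
    one_smul]

theorem twistDiff_untwist_apply (W : Lift E) (f : 𝓢(E, ℂ)) :
    ⇑(twistDiff (untwist W) f) = fun x => f (x + W.snd) - f x := by
  ext x
  simp [twistDiff, twistShift_apply, untwist]

theorem commute_twistShift_twistDiff (W W' : Lift E) :
    Commute (twistShift W) (twistDiff W') :=
  (commute_twistShift W W').sub_right (Commute.one_right _)

theorem commute_twistDiff (W W' : Lift E) : Commute (twistDiff W) (twistDiff W') :=
  (commute_twistShift_twistDiff W W').sub_left (Commute.one_left _)

variable [MeasurableSpace E] [BorelSpace E] [FiniteDimensional ℝ E]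

theorem eLpNorm_twistShift (W : Lift E) (f : 𝓢(E, ℂ)) :
    eLpNorm (twistShift W f) q volume = eLpNorm f q volume := by
  rw [← eLpNorm_comp_measurePreserving f.continuous.aestronglyMeasurable
    (measurePreserving_add_right volume W.snd)]
  refine eLpNorm_congr_norm_ae (ae_of_all _ fun x => ?_)
  rw [twistShift_apply, norm_mul, Circle.norm_coe, one_mul, Function.comp_apply]

theorem fourier_twistShift (W : Lift E) (f : 𝓢(E, ℂ)) (ξ : E) :
    𝓕 (twistShift W f) ξ = 𝐞 (inner ℝ W (ofFreq ξ)) * 𝓕 f ξ := by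
  have hcoe : ⇑(SchwartzMap.compSubConstCLM ℂ (-W.snd) f) = f ∘ fun v => v + W.snd := by
    ext x
    simp
  have hshift : 𝓕 (f ∘ fun v => v + W.snd) ξ = 𝐞 (inner ℝ W.snd ξ) • 𝓕 (f : E → ℂ) ξ :=
    congrFun (VectorFourier.fourierIntegral_comp_add_right 𝐞 volume (innerₗ E) f W.snd) ξ
  rw [twistShift, smul_apply, FourierTransform.fourier_smul,
    smul_apply, SchwartzMap.fourier_coe, hcoe, hshift, SchwartzMap.fourier_coe,
    inner_ofFreq, AddChar.map_add_eq_mul, Circle.coe_mul, Circle.smul_def, smul_eq_mul,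
    smul_eq_mul, mul_assoc]

theorem fourier_besselCLM (s : ℝ) (f : 𝓢(E, ℂ)) (ξ : E) :
    𝓕 (besselCLM s f) ξ = ((1 + ‖ξ‖ ^ 2) ^ (s / 2) : ℝ) * 𝓕 f ξ := by
  rw [besselCLM, SchwartzMap.fourierMultiplierCLM_apply, FourierTransform.fourier_fourierInv_eq,
    SchwartzMap.smulLeftCLM_apply_apply (hasTemperateGrowth_besselSymbol s), smul_eq_mul]

theorem commute_besselCLM_twistShift (s : ℝ) (W : Lift E) :
    Commute (besselCLM s) (twistShift W) := by
  refine ContinuousLinearMap.ext fun f => (fourierEquiv ℂ 𝓢(E, ℂ)).injective ?_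
  ext ξ
  simp only [mul_apply_eq_comp, fourierEquiv_apply, fourier_twistShift,
    fourier_besselCLM]
  ring

theorem commute_besselCLM_twistDiff (s : ℝ) (W : Lift E) :
    Commute (besselCLM s) (twistDiff W) :=
  (commute_besselCLM_twistShift s W).sub_right (Commute.one_right _)

end TwistedShift

section Product

open scoped SchwartzMap

variable {E : Type*} [NormedAddCommGroup E] [NormedSpace ℝ E]

/-- The pointwise product of two Schwartz functions. -/
noncomputable def schwartzMul : 𝓢(E, ℂ) →ₗ[ℂ] 𝓢(E, ℂ) →L[ℂ] 𝓢(E, ℂ) :=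
  SchwartzMap.pairing (ContinuousLinearMap.mul ℂ ℂ)

theorem coe_schwartzMul (f g : 𝓢(E, ℂ)) : ⇑(schwartzMul f g) = (f : E → ℂ) * g :=
  rfl

theorem eLpNorm_schwartzMul_le [MeasureSpace E] [OpensMeasurableSpace E]
    [SecondCountableTopologyEither E ℂ] {p q s : ℝ≥0∞} [ENNReal.HolderTriple p s q]
    (f g : 𝓢(E, ℂ)) :
    eLpNorm (schwartzMul f g) q volume ≤ eLpNorm f p volume * eLpNorm g s volume := by
  rw [coe_schwartzMul, ← smul_eq_mul]
  exact eLpNorm_smul_le_mul_eLpNorm (p := p) (q := s) g.continuous.aestronglyMeasurable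
    f.continuous.aestronglyMeasurable

end Product

section Order

open scoped SchwartzMap

variable {E F F' ι ι' : Type*} [NormedAddCommGroup E] [NormedSpace ℝ E] [MeasureSpace E]
  [NormedAddCommGroup F] [NormedAddCommGroup F'] {N : ι → ℝ≥0∞} {N' : ι' → ℝ≥0∞}
  {p q r s : ℝ≥0∞} {a b : ℝ} {A B : F → ι → 𝓢(E, ℂ)}

/-- The family `A W i` of Schwartz functions vanishes to order `a` at `W = 0` in `L^q`, uniformly
in `i` after normalization by `N i`. -/
def HasOrder (N : ι → ℝ≥0∞) (q : ℝ≥0∞) (a : ℝ) (A : F → ι → 𝓢(E, ℂ)) : Prop :=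
  ∃ C : ℝ≥0∞, C ≠ ∞ ∧ ∀ W i, eLpNorm (A W i) q volume ≤ C * (truncNorm W : ℝ≥0∞) ^ a * N i

theorem HasOrder.mono (hA : HasOrder N q a A) (hba : b ≤ a) : HasOrder N q b A := by
  obtain ⟨C, hC, hA⟩ := hA
  refine ⟨C, hC, fun W i => (hA W i).trans ?_⟩
  gcongr ?_ * _
  exact mul_le_mul_right (ENNReal.rpow_le_rpow_of_exponent_ge
    (ENNReal.coe_le_one_iff.2 (truncNorm_le_one W)) hba) C

theorem hasOrder_of_le_enorm_rpow {C : ℝ≥0∞} (hA : HasOrder N q 0 A) (hC : C ≠ ∞)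
    (h : ∀ W i, eLpNorm (A W i) q volume ≤ C * ‖W‖ₑ ^ a * N i) : HasOrder N q a A := by
  obtain ⟨C', hC', hA⟩ := hA
  refine ⟨max C C', max_ne_top hC hC', fun W i => ?_⟩
  rcases le_total ‖W‖₊ 1 with hW | hW
  · calc eLpNorm (A W i) q volume ≤ C * ‖W‖ₑ ^ a * N i := h W i
      _ ≤ max C C' * (truncNorm W : ℝ≥0∞) ^ a * N i := by
        rw [truncNorm, min_eq_right hW, enorm_eq_nnnorm]
        gcongr
        exact le_max_left C C'
  · calc eLpNorm (A W i) q volume ≤ C' * (truncNorm W : ℝ≥0∞) ^ (0 : ℝ) * N i := hA W i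
      _ ≤ max C C' * (truncNorm W : ℝ≥0∞) ^ a * N i := by
        rw [truncNorm, min_eq_left hW, ENNReal.coe_one, ENNReal.one_rpow, ENNReal.one_rpow]
        gcongr
        exact le_max_right C C'

theorem HasOrder.add [OpensMeasurableSpace E] [SecondCountableTopologyEither E ℂ] (hq : 1 ≤ q)
    (hA : HasOrder N q a A) (hB : HasOrder N q a B) :
    HasOrder N q a fun W i => A W i + B W i := by
  obtain ⟨C, hC, hA⟩ := hA
  obtain ⟨C', hC', hB⟩ := hB
  refine ⟨C + C', ENNReal.add_ne_top.2 ⟨hC, hC'⟩, fun W i => ?_⟩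
  calc eLpNorm (A W i + B W i) q volume
      ≤ eLpNorm (A W i) q volume + eLpNorm (B W i) q volume :=
        eLpNorm_add_le (A W i).continuous.aestronglyMeasurable
          (B W i).continuous.aestronglyMeasurable hq
    _ ≤ (C + C') * (truncNorm W : ℝ≥0∞) ^ a * N i := by
        rw [add_mul, add_mul]
        exact add_le_add (hA W i) (hB W i)

theorem HasOrder.smul {c : F → ℂ} {K : ℝ≥0∞} (hb : 0 ≤ b) (ha : 0 ≤ a)
    (hA : HasOrder N q a A) (hK : K ≠ ∞) (hc : ∀ W, ‖c W‖ₑ ≤ K * (truncNorm W : ℝ≥0∞) ^ b) :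
    HasOrder N q (b + a) fun W i => c W • A W i := by
  obtain ⟨C, hC, hA⟩ := hA
  refine ⟨K * C, ENNReal.mul_ne_top hK hC, fun W i => ?_⟩
  calc eLpNorm (c W • ⇑(A W i)) q volume = ‖c W‖ₑ * eLpNorm (A W i) q volume :=
        eLpNorm_const_smul _ _ _ _
    _ ≤ K * (truncNorm W : ℝ≥0∞) ^ b * (C * (truncNorm W : ℝ≥0∞) ^ a * N i) :=
        mul_le_mul' (hc W) (hA W i)
    _ = K * C * (truncNorm W : ℝ≥0∞) ^ (b + a) * N i := by
        rw [ENNReal.rpow_add_of_nonneg b a hb ha]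
        ring

theorem HasOrder.const_smul (ha : 0 ≤ a) (c : ℂ) (hA : HasOrder N q a A) :
    HasOrder N q a fun W i => c • A W i := by
  simpa using hA.smul (c := fun _ => c) (K := ‖c‖ₑ) (b := 0) le_rfl ha enorm_ne_top
    fun W => by simp

theorem HasOrder.sub [OpensMeasurableSpace E] [SecondCountableTopologyEither E ℂ] (hq : 1 ≤ q)
    (ha : 0 ≤ a) (hA : HasOrder N q a A) (hB : HasOrder N q a B) :
    HasOrder N q a fun W i => A W i - B W i := by
  simpa [sub_eq_add_neg] using hA.add hq (hB.const_smul ha (-1))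

theorem HasOrder.sum [OpensMeasurableSpace E] [SecondCountableTopologyEither E ℂ] (hq : 1 ≤ q)
    {κ : Type*} {A : κ → F → ι → 𝓢(E, ℂ)} (S : Finset κ) (hA : ∀ j ∈ S, HasOrder N q a (A j)) :
    HasOrder N q a fun W i => ∑ j ∈ S, A j W i := by
  classical
  induction S using Finset.induction_on with
  | empty => exact ⟨0, ENNReal.zero_ne_top, fun W i => by simp [FunLike.coe_zero]⟩
  | insert j S hj ih =>
    simp only [Finset.sum_insert hj]
    exact (hA j (Finset.mem_insert_self j S)).add hq
      (ih fun i hi => hA i (Finset.mem_insert_of_mem hi))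

theorem HasOrder.comp_of_norm_le {ρ : F' → F} {c : ℝ} (ha : 0 ≤ a) (hA : HasOrder N q a A)
    (hc : 1 ≤ c) (hρ : ∀ W, ‖ρ W‖ ≤ c * ‖W‖) : HasOrder N q a fun W i => A (ρ W) i := by
  obtain ⟨C, hC, hA⟩ := hA
  lift c to NNReal using zero_le_one.trans hc
  refine ⟨C * (c : ℝ≥0∞) ^ a,
    ENNReal.mul_ne_top hC (ENNReal.rpow_ne_top_of_nonneg ha ENNReal.coe_ne_top), fun W i => ?_⟩
  have htrunc : truncNorm (ρ W) ≤ c * truncNorm W := by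
    rw [truncNorm, truncNorm, mul_min, mul_one]
    exact min_le_min hc (hρ W)
  calc eLpNorm (A (ρ W) i) q volume
      ≤ C * (truncNorm (ρ W) : ℝ≥0∞) ^ a * N i := hA _ _
    _ ≤ C * (c * truncNorm W : ℝ≥0∞) ^ a * N i := by
        gcongr
        exact_mod_cast htrunc
    _ = C * (c : ℝ≥0∞) ^ a * (truncNorm W : ℝ≥0∞) ^ a * N i := by
        rw [ENNReal.mul_rpow_of_nonneg _ _ ha]
        ring

theorem HasOrder.schwartzMul [OpensMeasurableSpace E] [SecondCountableTopologyEither E ℂ]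
    [ENNReal.HolderTriple p s q] {B : F → ι' → 𝓢(E, ℂ)} (ha : 0 ≤ a) (hb : 0 ≤ b)
    (hA : HasOrder N p a A) (hB : HasOrder N' s b B) :
    HasOrder (fun z : ι × ι' => N z.1 * N' z.2) q (a + b)
      fun W z => schwartzMul (A W z.1) (B W z.2) := by
  obtain ⟨C, hC, hA⟩ := hA
  obtain ⟨C', hC', hB⟩ := hB
  refine ⟨C * C', ENNReal.mul_ne_top hC hC', fun W z => ?_⟩
  calc eLpNorm (_root_.schwartzMul (A W z.1) (B W z.2)) q volume
      ≤ eLpNorm (A W z.1) p volume * eLpNorm (B W z.2) s volume := eLpNorm_schwartzMul_le _ _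
    _ ≤ C * (truncNorm W : ℝ≥0∞) ^ a * N z.1 * (C' * (truncNorm W : ℝ≥0∞) ^ b * N' z.2) :=
        mul_le_mul' (hA _ _) (hB _ _)
    _ = C * C' * (truncNorm W : ℝ≥0∞) ^ (a + b) * (N z.1 * N' z.2) := by
        rw [ENNReal.rpow_add_of_nonneg a b ha hb]
        ring

end Order

section LpOrder

open scoped SchwartzMap

variable {E F F' : Type*} [NormedAddCommGroup E] [NormedSpace ℝ E] [MeasureSpace E]
  [NormedAddCommGroup F] [NormedAddCommGroup F'] {p q r s t : ℝ≥0∞} {a b : ℝ}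
  {T U : F → 𝓢(E, ℂ) →L[ℂ] 𝓢(E, ℂ)}

/-- The operators `T W` are bounded from `L^p` to `L^q` with norm `O(min(1, ‖W‖)^a)`. -/
def LpOrder (p q : ℝ≥0∞) (a : ℝ) (T : F → 𝓢(E, ℂ) →L[ℂ] 𝓢(E, ℂ)) : Prop :=
  HasOrder (fun f : 𝓢(E, ℂ) => eLpNorm f p volume) q a fun W f => T W f

theorem lpOrder_one : LpOrder p p 0 fun _ : F => (1 : 𝓢(E, ℂ) →L[ℂ] 𝓢(E, ℂ)) :=
  ⟨1, ENNReal.one_ne_top, fun W f => by simp⟩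

theorem LpOrder.mono (hT : LpOrder p q a T) (hba : b ≤ a) : LpOrder p q b T :=
  HasOrder.mono hT hba

theorem LpOrder.comp_of_norm_le {ρ : F' → F} {c : ℝ} (ha : 0 ≤ a) (hT : LpOrder p q a T)
    (hc : 1 ≤ c) (hρ : ∀ W, ‖ρ W‖ ≤ c * ‖W‖) : LpOrder p q a fun W => T (ρ W) :=
  HasOrder.comp_of_norm_le (A := fun W f => T W f) ha hT hc hρ

theorem LpOrder.mul (ha : 0 ≤ a) (hb : 0 ≤ b) (hT : LpOrder q r a T) (hU : LpOrder p q b U) :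
    LpOrder p r (a + b) fun W => T W * U W := by
  obtain ⟨C, hC, hT⟩ := hT
  obtain ⟨C', hC', hU⟩ := hU
  refine ⟨C * C', ENNReal.mul_ne_top hC hC', fun W f => ?_⟩
  calc eLpNorm (T W (U W f)) r volume
      ≤ C * (truncNorm W : ℝ≥0∞) ^ a * eLpNorm (U W f) q volume := hT W _
    _ ≤ C * (truncNorm W : ℝ≥0∞) ^ a * (C' * (truncNorm W : ℝ≥0∞) ^ b * eLpNorm f p volume) :=
        by gcongr; exact hU W f
    _ = C * C' * (truncNorm W : ℝ≥0∞) ^ (a + b) * eLpNorm f p volume := by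
        rw [ENNReal.rpow_add_of_nonneg a b ha hb]
        ring

theorem LpOrder.pow (ha : 0 ≤ a) (hT : LpOrder q q a T) (m : ℕ) :
    LpOrder q q (m * a) fun W => T W ^ m := by
  induction m with
  | zero => simpa using lpOrder_one
  | succ m ih =>
    simp only [pow_succ', Nat.cast_succ, add_mul, one_mul, add_comm (m * a)]
    exact hT.mul ha (by positivity) ih

variable [OpensMeasurableSpace E] [SecondCountableTopologyEither E ℂ]

theorem LpOrder.add (hq : 1 ≤ q) (hT : LpOrder p q a T) (hU : LpOrder p q a U) :
    LpOrder p q a fun W => T W + U W :=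
  HasOrder.add hq hT hU

theorem LpOrder.sub (hq : 1 ≤ q) (ha : 0 ≤ a) (hT : LpOrder p q a T) (hU : LpOrder p q a U) :
    LpOrder p q a fun W => T W - U W :=
  HasOrder.sub hq ha hT hU

theorem LpOrder.sum {κ : Type*} {T : κ → F → 𝓢(E, ℂ) →L[ℂ] 𝓢(E, ℂ)} (hq : 1 ≤ q)
    (S : Finset κ) (hT : ∀ j ∈ S, LpOrder p q a (T j)) :
    LpOrder p q a fun W => ∑ j ∈ S, T j W := by
  simpa [LpOrder] using HasOrder.sum (A := fun j W f => T j W f) hq S hT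

theorem LpOrder.schwartzMul [ENNReal.HolderTriple r s t] (ha : 0 ≤ a) (hb : 0 ≤ b)
    (hT : LpOrder p r a T) (hU : LpOrder q s b U) :
    HasOrder (fun z : 𝓢(E, ℂ) × 𝓢(E, ℂ) => eLpNorm z.1 p volume * eLpNorm z.2 q volume) t (a + b)
      fun W z => schwartzMul (T W z.1) (U W z.2) :=
  HasOrder.schwartzMul ha hb hT hU

end LpOrder

section DifferenceOrder

open Module Lift

open scoped SchwartzMap

variable {E : Type*} [NormedAddCommGroup E] [InnerProductSpace ℝ E] [MeasurableSpace E]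
  [BorelSpace E] [FiniteDimensional ℝ E] {q s : ℝ≥0∞} {σ τ ε α β t : ℝ}

theorem min_le_add_mul_rpow {x b c : ℝ} (hx : 0 ≤ x) (hb : 0 ≤ b) (hc : 0 ≤ c) (hσ0 : 0 ≤ σ)
    (hσ1 : σ ≤ 1) : min b (c * x) ≤ (b + c) * x ^ σ := by
  rw [add_mul]
  rcases le_total x 1 with hx1 | hx1
  · calc min b (c * x) ≤ c * x := min_le_right _ _
      _ ≤ c * x ^ σ := by
        gcongr
        simpa using Real.rpow_le_rpow_of_exponent_ge_of_imp hx hx1 hσ1 fun _ h => by simp at h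
      _ ≤ b * x ^ σ + c * x ^ σ := le_add_of_nonneg_left (by positivity)
  · calc min b (c * x) ≤ b := min_le_left _ _
      _ ≤ b * x ^ σ := le_mul_of_one_le_right hb (Real.one_le_rpow hx1 hσ0)
      _ ≤ b * x ^ σ + c * x ^ σ := le_add_of_nonneg_right (by positivity)

theorem eLpNorm_add_right_sub_self_le_two_mul (hq : 1 ≤ q) (f : 𝓢(E, ℂ)) (w : E) :
    eLpNorm (fun y => f (y + w) - f y) q volume ≤ 2 * eLpNorm f q volume := by
  have hmeas := f.continuous.aestronglyMeasurable (μ := volume)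
  have hmp := measurePreserving_add_right (volume : Measure E) w
  calc eLpNorm (fun y => f (y + w) - f y) q volume
      ≤ eLpNorm (f ∘ (· + w)) q volume + eLpNorm f q volume :=
        eLpNorm_sub_le (hmeas.comp_measurePreserving hmp) hmeas hq
    _ = 2 * eLpNorm f q volume := by rw [eLpNorm_comp_measurePreserving hmeas hmp, two_mul]

theorem eLpNorm_heatFlow_add_right_sub_self_le_rpow (ht : 0 < t) (hq : 1 ≤ q) (hσ0 : 0 ≤ σ)
    (hσ1 : σ ≤ 1) (f : 𝓢(E, ℂ)) (w : E) :
    eLpNorm (heatFlow t fun y => f (y + w) - f y) q volume ≤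
      ENNReal.ofReal (t ^ (-(σ / 2))) *
        (ENNReal.ofReal (2 + 2 * √π * 2 ^ (finrank ℝ E / 2 : ℝ)) * ‖w‖ₑ ^ σ *
          eLpNorm f q volume) := by
  set c := 2 * √π * (2 : ℝ) ^ (finrank ℝ E / 2 : ℝ)
  have hmeas : StronglyMeasurable fun y => f (y + w) - f y :=
    (f.continuous.comp (continuous_add_const w)).stronglyMeasurable.sub
      f.continuous.stronglyMeasurable
  have htriv : eLpNorm (heatFlow t fun y => f (y + w) - f y) q volume ≤
      ENNReal.ofReal 2 * eLpNorm f q volume := by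
    simpa using (eLpNorm_heatFlow_le ht hq le_rfl hmeas).trans
      (mul_le_mul_right (eLpNorm_add_right_sub_self_le_two_mul hq f w) _)
  calc eLpNorm (heatFlow t fun y => f (y + w) - f y) q volume
      ≤ ENNReal.ofReal (min 2 (c * (‖w‖ * t ^ (-(1 / 2) : ℝ)))) * eLpNorm f q volume := by
        rw [(ENNReal.ofReal_mono).map_min, (mul_left_mono (a := eLpNorm f q volume)).map_min]
        exact le_min htriv (eLpNorm_heatFlow_add_right_sub_self_le ht hq f w)
    _ ≤ ENNReal.ofReal ((2 + c) * (‖w‖ * t ^ (-(1 / 2) : ℝ)) ^ σ) * eLpNorm f q volume := by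
        gcongr
        exact min_le_add_mul_rpow (by positivity) two_pos.le (by positivity) hσ0 hσ1
    _ = _ := by
        rw [Real.mul_rpow (norm_nonneg w) (by positivity), ← Real.rpow_mul ht.le,
          ← ofReal_norm, ENNReal.ofReal_rpow_of_nonneg (norm_nonneg w) hσ0,
          ← mul_assoc (2 + c), ENNReal.ofReal_mul (by positivity),
          ENNReal.ofReal_mul (by positivity), show -(1 / 2) * σ = -(σ / 2) by ring]
        ring

theorem lpOrder_besselCLM_neg {F : Type*} [NormedAddCommGroup F] (hq : 1 ≤ q) (hqs : q ≤ s)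
    (hβ : finrank ℝ E * (q⁻¹ - s⁻¹).toReal < β) :
    LpOrder q s 0 fun _ : F => besselCLM (E := E) (-β) := by
  obtain ⟨C, hC, h⟩ := exists_eLpNorm_besselCLM_neg_le_of_le hq hqs hβ
  exact ⟨C, hC, fun W f => by simpa using h f⟩

theorem lpOrder_twistShift : LpOrder q q 0 (twistShift (E := E)) :=
  ⟨1, ENNReal.one_ne_top, fun W f => by simp [eLpNorm_twistShift]⟩

theorem lpOrder_twistDiff (hq : 1 ≤ q) : LpOrder q q 0 (twistDiff (E := E)) :=
  lpOrder_twistShift.sub hq le_rfl lpOrder_one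

theorem LpOrder.comp_untwist {a : ℝ} {T : Lift E → 𝓢(E, ℂ) →L[ℂ] 𝓢(E, ℂ)} {p : ℝ≥0∞}
    (ha : 0 ≤ a) (hT : LpOrder p q a T) : LpOrder p q a fun W => T (untwist W) :=
  hT.comp_of_norm_le ha le_rfl fun W => by simpa using norm_untwist_le W

theorem LpOrder.comp_nsmul {a : ℝ} {T : Lift E → 𝓢(E, ℂ) →L[ℂ] 𝓢(E, ℂ)} {p : ℝ≥0∞}
    (ha : 0 ≤ a) (hT : LpOrder p q a T) {m : ℕ} (hm : m ≠ 0) :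
    LpOrder p q a fun W => T (m • W) :=
  hT.comp_of_norm_le ha (Nat.one_le_cast.2 (Nat.one_le_iff_ne_zero.2 hm)) fun _ => norm_nsmul_le

theorem lpOrder_fourierChar_fst_sub_one_smul {a : ℝ} {T : Lift E → 𝓢(E, ℂ) →L[ℂ] 𝓢(E, ℂ)}
    {p : ℝ≥0∞} (ha : 0 ≤ a) (hT : LpOrder p q a T) :
    LpOrder p q (1 + a) fun W => ((𝐞 W.fst : ℂ) - 1) • T W :=
  HasOrder.smul (K := ENNReal.ofReal (2 * π)) zero_le_one ha hT ENNReal.ofReal_ne_top fun W => by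
    rw [ENNReal.rpow_one, ← ofReal_norm, ← ENNReal.ofReal_coe_nnreal,
      ← ENNReal.ofReal_mul (by positivity)]
    exact ENNReal.ofReal_le_ofReal (norm_fourierChar_sub_one_le (WithLp.norm_fst_le ℝ W))

theorem lpOrder_twistDiff_untwist_mul_besselCLM (hq : 1 ≤ q) (hσ0 : 0 ≤ σ) (hσ1 : σ ≤ 1)
    (hσβ : σ < β) :
    LpOrder q q σ fun W : Lift E => twistDiff (untwist W) * besselCLM (-β) := by
  have hβ : 0 < β := hσ0.trans_lt hσβ
  obtain ⟨C, hC, hsub⟩ := exists_eLpNorm_besselCLM_neg_le (E := E) hβ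
    (div_lt_div_of_pos_right hσβ two_pos)
  have hbdd : LpOrder q q 0 fun W : Lift E => twistDiff (untwist W) * besselCLM (-β) := by
    simpa using ((lpOrder_twistDiff hq).comp_untwist le_rfl).mul le_rfl le_rfl
      (lpOrder_besselCLM_neg hq le_rfl (by simpa using hβ))
  refine hasOrder_of_le_enorm_rpow
    (C := C * ENNReal.ofReal (2 + 2 * √π * 2 ^ (finrank ℝ E / 2 : ℝ))) hbdd
    (ENNReal.mul_ne_top hC ENNReal.ofReal_ne_top) fun W f => ?_
  dsimp only
  rw [← (commute_besselCLM_twistDiff (-β) (untwist W)).eq, mul_apply_eq_comp, mul_assoc, mul_assoc,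
    ← mul_assoc (ENNReal.ofReal _)]
  refine hsub q _ _ hq fun t ht => ?_
  rw [twistDiff_untwist_apply]
  refine (eLpNorm_heatFlow_add_right_sub_self_le_rpow ht hq hσ0 hσ1 f W.snd).trans ?_
  gcongr
  rw [enorm_le_iff_norm_le]
  exact WithLp.norm_snd_le ℝ W

theorem lpOrder_twistDiff_mul_besselCLM (hq : 1 ≤ q) (hσ0 : 0 ≤ σ) (hσ1 : σ ≤ 1) (hσβ : σ < β) :
    LpOrder q q σ fun W : Lift E => twistDiff W * besselCLM (-β) := by
  have hbdd : LpOrder q q 0 fun W : Lift E => twistShift (untwist W) * besselCLM (-β) := by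
    simpa using (lpOrder_twistShift.comp_untwist le_rfl).mul le_rfl le_rfl
      (lpOrder_besselCLM_neg hq le_rfl (by simpa using hσ0.trans_lt hσβ))
  have htwist := lpOrder_fourierChar_fst_sub_one_smul le_rfl hbdd
  simpa only [← smul_mul_assoc, ← add_mul, ← twistDiff_sub_twistDiff_untwist, sub_add_cancel]
    using (htwist.mono (by linarith)).add hq
      (lpOrder_twistDiff_untwist_mul_besselCLM hq hσ0 hσ1 hσβ)

theorem lpOrder_twistDiff_pow_mul_besselCLM (hq : 1 ≤ q) (hτ : 0 ≤ τ) (hτα : τ < α) {m : ℕ}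
    (hm : α ≤ m) : LpOrder q q τ fun W : Lift E => twistDiff W ^ m * besselCLM (-α) := by
  have hm0 : (0 : ℝ) < m := hτ.trans_lt (hτα.trans_le hm)
  have hpow := (lpOrder_twistDiff_mul_besselCLM (E := E) hq (σ := τ / m) (β := α / m)
    (by positivity) ((div_le_one hm0).2 (hτα.le.trans hm))
    (div_lt_div_of_pos_right hτα hm0)).pow (by positivity) m
  simpa only [(commute_besselCLM_twistDiff _ _).symm.mul_pow, ← besselCLM_nsmul, smul_neg,
    nsmul_eq_mul, mul_div_cancel₀ _ hm0.ne'] using hpow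

theorem lpOrder_twistDiff_pow_mul_besselCLM_of_le (hq : 1 ≤ q) (hqs : q ≤ s) (hε0 : 0 ≤ ε)
    (hε1 : ε ≤ 1) (hα : finrank ℝ E * (q⁻¹ - s⁻¹).toReal + ε < α) {m : ℕ} (hm : m ≠ 0) :
    LpOrder q s ε fun W : Lift E => twistDiff W ^ m * besselCLM (-α) := by
  obtain ⟨m, rfl⟩ := Nat.exists_eq_succ_of_ne_zero hm
  obtain ⟨β, hβ, hβα⟩ := exists_between (lt_sub_iff_add_lt.2 hα)
  have hs := hq.trans hqs
  have hsplit : besselCLM (E := E) (-α) = besselCLM (-(α - β)) * besselCLM (-β) := by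
    rw [← besselCLM_add]
    congr 1
    ring
  have hdiff := ((lpOrder_twistDiff (E := E) hs).pow le_rfl m).mul (by simp) (by simpa using hε0)
    ((lpOrder_twistDiff_mul_besselCLM hs hε0 hε1 (lt_sub_comm.1 hβα)).mul hε0 le_rfl
      (lpOrder_besselCLM_neg hq hqs hβ))
  simpa only [mul_zero, zero_add, add_zero, pow_succ, hsplit, mul_assoc] using hdiff

end DifferenceOrder

section LeibnizDefect

open Lift

open scoped SchwartzMap

variable {E : Type*} [NormedAddCommGroup E]

theorem untwist_neg (W : Lift E) : untwist (-W) = -untwist W :=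
  WithLp.ofLp_injective 2 (by simp [untwist])

variable [InnerProductSpace ℝ E]

theorem schwartzMul_comm (f g : 𝓢(E, ℂ)) : schwartzMul f g = schwartzMul g f := by
  ext x
  simp [coe_schwartzMul, mul_comm]

theorem twistShift_schwartzMul (W : Lift E) (f g : 𝓢(E, ℂ)) :
    twistShift W (schwartzMul f g) = schwartzMul (twistShift (untwist W) f) (twistShift W g) := by
  ext x
  simp [twistShift_apply, coe_schwartzMul, untwist, mul_left_comm]

theorem twistDiff_schwartzMul (W : Lift E) (f g : 𝓢(E, ℂ)) :
    twistDiff W (schwartzMul f g) =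
      schwartzMul f (twistDiff W g) +
        schwartzMul (twistDiff (untwist W) f) (twistShift W g) := by
  simp [twistDiff, twistShift_schwartzMul]

theorem twistDiff_pow_schwartzMul (W : Lift E) (f g : 𝓢(E, ℂ)) (m : ℕ) :
    (twistDiff W ^ m) (schwartzMul f g) =
      ∑ ij ∈ Finset.HasAntidiagonal.antidiagonal m, m.choose ij.1 •
        schwartzMul ((twistDiff (untwist W) ^ ij.1) f)
          ((twistShift W ^ ij.1 * twistDiff W ^ ij.2) g) := by
  induction m with
  | zero => simp
  | succ m ih =>
    have hstep (i j : ℕ) :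
        twistDiff W (schwartzMul ((twistDiff (untwist W) ^ i) f)
          ((twistShift W ^ i * twistDiff W ^ j) g)) =
        schwartzMul ((twistDiff (untwist W) ^ i) f)
            ((twistShift W ^ i * twistDiff W ^ (j + 1)) g) +
          schwartzMul ((twistDiff (untwist W) ^ (i + 1)) f)
            ((twistShift W ^ (i + 1) * twistDiff W ^ j) g) := by
      have hcomm : twistDiff W * (twistShift W ^ i * twistDiff W ^ j) =
          twistShift W ^ i * twistDiff W ^ (j + 1) := by
        rw [pow_succ', ((commute_twistShift_twistDiff W W).pow_left i).symm.left_comm]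
      rw [twistDiff_schwartzMul, ← mul_apply_eq_comp (twistDiff W), hcomm,
        ← mul_apply_eq_comp (twistDiff _), ← mul_apply_eq_comp (twistShift W), ← pow_succ',
        ← mul_assoc, ← pow_succ']
    rw [Finset.sum_antidiagonal_choose_succ_nsmul
      (fun i j => schwartzMul ((twistDiff (untwist W) ^ i) f)
        ((twistShift W ^ i * twistDiff W ^ j) g)), pow_succ', mul_apply_eq_comp, ih, map_sum]
    simp only [map_nsmul, hstep, nsmul_add, Finset.sum_add_distrib]
    congr 1
    refine Finset.sum_congr rfl fun ij hij => ?_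
    rw [Nat.choose_symm_of_eq_add (Finset.HasAntidiagonal.mem_antidiagonal.1 hij).symm]

/-- The failure `T(fg) - f T(g) - T(f) g` of an operator `T` to obey the Leibniz rule. -/
noncomputable def leibnizDefect (T : 𝓢(E, ℂ) →L[ℂ] 𝓢(E, ℂ)) (f g : 𝓢(E, ℂ)) : 𝓢(E, ℂ) :=
  T (schwartzMul f g) - schwartzMul f (T g) - schwartzMul (T f) g

/-- The twisted difference of order `2k` recentered at the origin, whose Fourier multiplier
`‖𝐞 ⟪W, (1, ξ)⟫ - 1‖ ^ (2k)` is nonnegative. -/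
noncomputable def centeredDiff (k : ℕ) (W : Lift E) : 𝓢(E, ℂ) →L[ℂ] 𝓢(E, ℂ) :=
  (-1 : ℂ) ^ k • (twistShift (-(k • W)) * twistDiff W ^ (2 * k))

theorem twistShift_neg_mul_self (W : Lift E) : twistShift (-W) * twistShift W = 1 := by
  rw [← twistShift_add, neg_add_cancel, twistShift_zero]

theorem leibnizDefect_centeredDiff (k : ℕ) (W : Lift E) (f g : 𝓢(E, ℂ)) :
    leibnizDefect (centeredDiff k W) f g = (-1 : ℂ) ^ k • twistShift (-(k • W))
      ((twistDiff W ^ (2 * k)) (schwartzMul f g) -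
        schwartzMul (twistShift (untwist (k • W)) f) ((twistDiff W ^ (2 * k)) g) -
        schwartzMul ((twistDiff W ^ (2 * k)) f) (twistShift (untwist (k • W)) g)) := by
  have hcancel (h : 𝓢(E, ℂ)) :
      twistShift (untwist (-(k • W))) (twistShift (untwist (k • W)) h) = h := by
    rw [untwist_neg, ← mul_apply_eq_comp, twistShift_neg_mul_self, one_apply_eq_self]
  rw [map_sub, map_sub, twistShift_schwartzMul (-(k • W)) (twistShift _ f), hcancel,
    schwartzMul_comm _ (twistShift _ g), twistShift_schwartzMul (-(k • W)) (twistShift _ g),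
    hcancel, schwartzMul_comm g]
  simp only [leibnizDefect, centeredDiff, smul_apply, mul_apply_eq_comp, smul_sub, map_smul]

theorem twistDiff_pow_schwartzMul_sub_sub {m : ℕ} (hm : m ≠ 0) (W W' : Lift E) (f g : 𝓢(E, ℂ)) :
    (twistDiff W ^ m) (schwartzMul f g) - schwartzMul (twistShift W' f) ((twistDiff W ^ m) g) -
        schwartzMul ((twistDiff W ^ m) f) (twistShift W' g) =
      ∑ i ∈ Finset.Ioo 0 m, m.choose i • schwartzMul ((twistDiff (untwist W) ^ i) f)
          ((twistShift W ^ i * twistDiff W ^ (m - i)) g) +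
        schwartzMul ((twistDiff (untwist W) ^ m) f) ((twistDiff (m • W) - twistDiff W') g) -
        schwartzMul (twistDiff W' f) ((twistDiff W ^ m) g) -
        schwartzMul ((twistDiff W ^ m - twistDiff (untwist W) ^ m) f) (twistShift W' g) := by
  rw [twistDiff_pow_schwartzMul, Finset.Nat.sum_antidiagonal_eq_sum_range_succ_mk,
    Finset.sum_range_succ, Finset.range_eq_Ico,
    ← Finset.sum_Ioo_add_eq_sum_Ico (Nat.pos_of_ne_zero hm)]
  simp only [twistDiff, twistShift_nsmul, Nat.choose_zero_right, Nat.choose_self, tsub_zero,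
    tsub_self, pow_zero, one_mul, mul_one, one_smul, one_apply_eq_self, sub_apply, map_sub]
  abel

end LeibnizDefect

section CommutatorOrder

open Module Lift

open scoped SchwartzMap

variable {E : Type*} [NormedAddCommGroup E] [InnerProductSpace ℝ E] [MeasurableSpace E]
  [BorelSpace E] [FiniteDimensional ℝ E] {p q : ℝ≥0∞} {τ ε α : ℝ} {k : ℕ}

theorem lpOrder_twistDiff_pow_mul_untwist_pow_mul_besselCLM (hq : 1 ≤ q) (hτ : 0 ≤ τ)
    (hτα : τ < α) {i j : ℕ} (hij : α ≤ i ∨ α ≤ j) :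
    LpOrder q q τ fun W : Lift E =>
      twistDiff W ^ i * twistDiff (untwist W) ^ j * besselCLM (-α) := by
  have hbdd (m : ℕ) := (lpOrder_twistDiff (E := E) hq).pow le_rfl m
  simp only [mul_zero] at hbdd
  rcases hij with hi | hj
  · have h := ((hbdd j).comp_untwist le_rfl).mul le_rfl hτ
      (lpOrder_twistDiff_pow_mul_besselCLM hq hτ hτα hi)
    simpa only [zero_add, ← mul_assoc, ((commute_twistDiff _ _).pow_pow _ _).eq] using h
  · have h := (hbdd i).mul le_rfl hτ
      ((lpOrder_twistDiff_pow_mul_besselCLM hq hτ hτα hj).comp_untwist hτ)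
    simpa only [zero_add, ← mul_assoc] using h

theorem lpOrder_twistDiff_pow_sub_untwist_pow_mul_besselCLM (hq : 1 ≤ q) (hτ : 0 ≤ τ)
    (hτα : τ < α) (hk : α ≤ k) :
    LpOrder q q (1 + τ) fun W : Lift E =>
      (twistDiff W ^ (2 * k) - twistDiff (untwist W) ^ (2 * k)) * besselCLM (-α) := by
  have hsum := LpOrder.sum hq (Finset.range (2 * k)) fun i _ =>
    lpOrder_twistDiff_pow_mul_untwist_pow_mul_besselCLM (E := E) hq hτ hτα
      (i := i) (j := 2 * k - 1 - i) <| by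
        rcases le_or_gt k i with h | h
        · exact .inl (hk.trans (by exact_mod_cast h))
        · exact .inr (hk.trans (by exact_mod_cast (by lia : k ≤ 2 * k - 1 - i)))
  have h := lpOrder_fourierChar_fst_sub_one_smul (by simpa using hτ)
    ((lpOrder_twistShift.comp_untwist le_rfl).mul le_rfl hτ hsum)
  simpa only [zero_add, ← Finset.sum_mul, ← smul_mul_assoc, ← mul_assoc,
    ← twistDiff_sub_twistDiff_untwist, (commute_twistDiff _ _).mul_geom_sum₂] using h

theorem ne_zero_of_pos_of_le_natCast {m : ℕ} (hα0 : 0 < α) (hm : α ≤ m) : m ≠ 0 :=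
  Nat.cast_ne_zero.1 (hα0.trans_le hm).ne'

theorem exists_holderTriple (hqp : q ≤ p) : ∃ s, ENNReal.HolderTriple p s q :=
  ⟨(q⁻¹ - p⁻¹)⁻¹, ⟨by rw [inv_inv, add_tsub_cancel_of_le (ENNReal.inv_le_inv.2 hqp)]⟩⟩

/- In each of the following products one factor has order `ε` and spends the smoothness
`finrank ℝ E / p` on integrability, while the other has order close to `α`. -/

theorem hasOrder_leibniz_term (hq : 1 ≤ q) (hqp : q ≤ p) (hε0 : 0 < ε) (hε1 : ε ≤ 1)
    (hα : finrank ℝ E * p⁻¹.toReal + ε < α) {i j : ℕ} (hi : i ≠ 0) (hj : j ≠ 0)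
    (hij : α ≤ i ∨ α ≤ j) :
    HasOrder (fun z : 𝓢(E, ℂ) × 𝓢(E, ℂ) => eLpNorm z.1 p volume * eLpNorm z.2 q volume) q
      (α + ε / 2) fun (W : Lift E) z =>
        schwartzMul ((twistDiff (untwist W) ^ i) (besselCLM (-α) z.1))
          ((twistShift W ^ i * twistDiff W ^ j) (besselCLM (-α) z.2)) := by
  obtain ⟨s, _⟩ := exists_holderTriple hqp
  have hτ : 0 ≤ α - ε / 2 := by
    have : 0 ≤ finrank ℝ E * p⁻¹.toReal := by positivity
    linarith
  have hshift {r : ℝ≥0∞} := (lpOrder_twistShift (E := E) (q := r)).pow le_rfl i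
  simp only [mul_zero] at hshift
  rcases hij with hi' | hj'
  · have hlow := lpOrder_twistDiff_pow_mul_besselCLM_of_le (s := s) hq
      (ENNReal.HolderTriple.le s p q) hε0.le hε1
      (by rwa [ENNReal.HolderTriple.inv_sub_inv_eq_inv p s (one_pos.trans_le hq).ne']) hj
    have h := ((lpOrder_twistDiff_pow_mul_besselCLM (hq.trans hqp) hτ (sub_lt_self α (half_pos hε0))
      hi').comp_untwist hτ).schwartzMul (t := q) hτ (by simpa using hε0.le)
      (hshift.mul le_rfl hε0.le hlow)
    exact h.mono (by linarith)
  · have hlow := lpOrder_twistDiff_pow_mul_besselCLM_of_le (s := ∞) (hq.trans hqp) le_top hε0.le hε1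
      (by simpa using hα) hi
    have h := (hlow.comp_untwist hε0.le).schwartzMul (t := q) hε0.le (by simpa using hτ)
      (hshift.mul le_rfl hτ
        (lpOrder_twistDiff_pow_mul_besselCLM hq hτ (sub_lt_self α (half_pos hε0)) hj'))
    exact h.mono (by linarith)

theorem hasOrder_schwartzMul_twistDiff_sub_twistDiff (hq : 1 ≤ q) (hqp : q ≤ p) (hε0 : 0 < ε)
    (hε1 : ε ≤ 1) (hα : finrank ℝ E * p⁻¹.toReal + ε < α) (hk : α ≤ k) {m : ℕ} (hm : α ≤ m) :
    HasOrder (fun z : 𝓢(E, ℂ) × 𝓢(E, ℂ) => eLpNorm z.1 p volume * eLpNorm z.2 q volume) q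
      (α + ε / 2) fun (W : Lift E) z =>
        schwartzMul ((twistDiff (untwist W) ^ m) (besselCLM (-α) z.1))
          ((twistDiff (m • W) - twistDiff (untwist (k • W))) (besselCLM (-α) z.2)) := by
  obtain ⟨s, _⟩ := exists_holderTriple hqp
  have hα0 := lt_of_le_of_lt (le_add_of_nonneg_left (by positivity)) hα
  have hτ : 0 ≤ α - ε / 2 := by linarith
  have hlow := lpOrder_twistDiff_pow_mul_besselCLM_of_le (s := s) hq
    (ENNReal.HolderTriple.le s p q) hε0.le hε1
    (by rwa [ENNReal.HolderTriple.inv_sub_inv_eq_inv p s (one_pos.trans_le hq).ne']) one_ne_zero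
  simp only [pow_one] at hlow
  have hdiff := (hlow.comp_nsmul hε0.le (ne_zero_of_pos_of_le_natCast (hε0.trans hα0) hm)).sub
    (hq.trans (ENNReal.HolderTriple.le s p q)) hε0.le ((hlow.comp_untwist hε0.le).comp_nsmul hε0.le
      (ne_zero_of_pos_of_le_natCast (hε0.trans hα0) hk))
  have h := ((lpOrder_twistDiff_pow_mul_besselCLM (hq.trans hqp) hτ (sub_lt_self α (half_pos hε0))
    hm).comp_untwist hτ).schwartzMul (t := q) hτ hε0.le hdiff
  simp only [← sub_mul] at h
  exact h.mono (by linarith)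

theorem hasOrder_schwartzMul_twistDiff_untwist_left (hq : 1 ≤ q) (hqp : q ≤ p) (hε0 : 0 < ε)
    (hε1 : ε ≤ 1) (hα : finrank ℝ E * p⁻¹.toReal + ε < α) (hk : α ≤ k) {m : ℕ} (hm : α ≤ m) :
    HasOrder (fun z : 𝓢(E, ℂ) × 𝓢(E, ℂ) => eLpNorm z.1 p volume * eLpNorm z.2 q volume) q
      (α + ε / 2) fun (W : Lift E) z =>
        schwartzMul (twistDiff (untwist (k • W)) (besselCLM (-α) z.1))
          ((twistDiff W ^ m) (besselCLM (-α) z.2)) := by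
  have hα0 := lt_of_le_of_lt (le_add_of_nonneg_left (by positivity)) hα
  have hτ : 0 ≤ α - ε / 2 := by linarith
  have hlow := lpOrder_twistDiff_pow_mul_besselCLM_of_le (s := ∞) (hq.trans hqp) le_top hε0.le hε1
    (by simpa using hα) one_ne_zero
  simp only [pow_one] at hlow
  have h := ((hlow.comp_untwist hε0.le).comp_nsmul hε0.le
    (ne_zero_of_pos_of_le_natCast (hε0.trans hα0) hk)).schwartzMul (t := q) hε0.le hτ
    (lpOrder_twistDiff_pow_mul_besselCLM hq hτ (sub_lt_self α (half_pos hε0)) hm)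
  exact h.mono (by linarith)

theorem hasOrder_schwartzMul_twistDiff_pow_sub_untwist_pow (hq : 1 ≤ q) (hqp : q ≤ p) (hε0 : 0 < ε)
    (hε1 : ε ≤ 1) (hα : finrank ℝ E * p⁻¹.toReal + ε < α) (hk : α ≤ k) :
    HasOrder (fun z : 𝓢(E, ℂ) × 𝓢(E, ℂ) => eLpNorm z.1 p volume * eLpNorm z.2 q volume) q
      (α + ε / 2) fun (W : Lift E) z =>
        schwartzMul ((twistDiff W ^ (2 * k) - twistDiff (untwist W) ^ (2 * k)) (besselCLM (-α) z.1))
          (twistShift (untwist (k • W)) (besselCLM (-α) z.2)) := by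
  obtain ⟨s, _⟩ := exists_holderTriple hqp
  have hα0 := lt_of_le_of_lt (le_add_of_nonneg_left (by positivity)) hα
  have hτ : 0 ≤ α - ε / 2 := by linarith
  have hbdd := lpOrder_besselCLM_neg (F := Lift E) (s := s) (β := α) hq
    (ENNReal.HolderTriple.le s p q) <| by
      rw [ENNReal.HolderTriple.inv_sub_inv_eq_inv p s (one_pos.trans_le hq).ne']
      exact (lt_add_of_pos_right _ hε0).trans hα
  have h := (lpOrder_twistDiff_pow_sub_untwist_pow_mul_besselCLM (hq.trans hqp) hτ
    (sub_lt_self α (half_pos hε0)) hk).schwartzMul (t := q) (by positivity) (by simp)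
    (((lpOrder_twistShift.comp_untwist le_rfl).comp_nsmul le_rfl
      (ne_zero_of_pos_of_le_natCast (hε0.trans hα0) hk)).mul le_rfl le_rfl hbdd)
  exact h.mono (by linarith)

theorem hasOrder_leibnizDefect_centeredDiff (hq : 1 ≤ q) (hqp : q ≤ p) (hε0 : 0 < ε) (hε1 : ε ≤ 1)
    (hα : finrank ℝ E * p⁻¹.toReal + ε < α) (hk : α ≤ k) :
    HasOrder (fun z : 𝓢(E, ℂ) × 𝓢(E, ℂ) => eLpNorm z.1 p volume * eLpNorm z.2 q volume) q
      (α + ε / 2) fun (W : Lift E) z =>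
        leibnizDefect (centeredDiff k W) (besselCLM (-α) z.1) (besselCLM (-α) z.2) := by
  have hα0 := hε0.trans (lt_of_le_of_lt (le_add_of_nonneg_left (by positivity)) hα)
  have hk2 : α ≤ (2 * k : ℕ) := hk.trans (by exact_mod_cast Nat.le_mul_of_pos_left k two_pos)
  have horder : 0 ≤ α + ε / 2 := by linarith
  have hsum := HasOrder.sum hq (Finset.Ioo 0 (2 * k)) fun i hi => by
    obtain ⟨hi0, hik⟩ := Finset.mem_Ioo.1 hi
    refine (hasOrder_leibniz_term (E := E) hq hqp hε0 hε1 hα hi0.ne' (j := 2 * k - i)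
      (by lia) ?_).const_smul horder (((2 * k).choose i : ℕ) : ℂ)
    rcases le_or_gt k i with h | h
    · exact .inl (hk.trans (by exact_mod_cast h))
    · exact .inr (hk.trans (by exact_mod_cast (by lia : k ≤ 2 * k - i)))
  have hbracket := ((hsum.add hq
    (hasOrder_schwartzMul_twistDiff_sub_twistDiff hq hqp hε0 hε1 hα hk hk2)).sub hq horder
    (hasOrder_schwartzMul_twistDiff_untwist_left hq hqp hε0 hε1 hα hk hk2)).sub hq horder
    (hasOrder_schwartzMul_twistDiff_pow_sub_untwist_pow hq hqp hε0 hε1 hα hk)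
  simp only [Nat.cast_smul_eq_nsmul, ← twistDiff_pow_schwartzMul_sub_sub
    (ne_zero_of_pos_of_le_natCast hα0 hk2)] at hbracket
  obtain ⟨C, hC, hbracket⟩ := hbracket
  refine ⟨C, hC, fun W z => le_of_eq_of_le ?_ (hbracket W z)⟩
  dsimp only
  rw [leibnizDefect_centeredDiff, FunLike.coe_smul, eLpNorm_const_smul, eLpNorm_twistShift]
  simp

end CommutatorOrder

section StableMeasure

open Module

open scoped NNReal

variable {V : Type*} [NormedAddCommGroup V] [InnerProductSpace ℝ V] [FiniteDimensional ℝ V]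
  [MeasurableSpace V] [BorelSpace V] {k : ℕ} {α : ℝ}

/-- The measure `‖W‖ ^ (-dim V - α) dW`, homogeneous of degree `-α`. For `0 < α < 2` it is the
Lévy measure of the isotropic `α`-stable process. -/
noncomputable def stableMeasure (V : Type*) [NormedAddCommGroup V] [InnerProductSpace ℝ V]
    [FiniteDimensional ℝ V] [MeasurableSpace V] [BorelSpace V] (α : ℝ) : Measure V :=
  volume.withDensity fun W => (‖W‖₊ ^ (-(finrank ℝ V : ℝ) - α) : ℝ≥0)

instance : SFinite (stableMeasure V α) := Measure.withDensity.instSFinite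

theorem lintegral_stableMeasure {F : V → ℝ≥0∞} (hF : Measurable F) :
    ∫⁻ W, F W ∂stableMeasure V α =
      ∫⁻ W, (‖W‖₊ ^ (-(finrank ℝ V : ℝ) - α) : ℝ≥0) * F W :=
  lintegral_withDensity_eq_lintegral_mul volume (by fun_prop) hF

theorem lintegral_stableMeasure_comp_linearIsometryEquiv (A : V ≃ₗᵢ[ℝ] V) {F : V → ℝ≥0∞}
    (hF : Measurable F) : ∫⁻ W, F (A W) ∂stableMeasure V α = ∫⁻ W, F W ∂stableMeasure V α := by
  have hcomp := A.measurePreserving.lintegral_comp_emb A.toHomeomorph.measurableEmbedding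
    fun W => (‖W‖₊ ^ (-(finrank ℝ V : ℝ) - α) : ℝ≥0) * F W
  simp only [LinearIsometryEquiv.nnnorm_map] at hcomp
  rw [lintegral_stableMeasure hF, lintegral_stableMeasure (by fun_prop), hcomp]

theorem lintegral_stableMeasure_comp_smul {r : ℝ} (hr : 0 < r) {F : V → ℝ≥0∞}
    (hF : Measurable F) :
    ∫⁻ W, F (r • W) ∂stableMeasure V α =
      ENNReal.ofReal (r ^ α) * ∫⁻ W, F W ∂stableMeasure V α := by
  set G : V → ℝ≥0∞ := fun W => (‖W‖₊ ^ (-(finrank ℝ V : ℝ) - α) : ℝ≥0) * F W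
  have hweight (W : V) : (‖W‖₊ ^ (-(finrank ℝ V : ℝ) - α) : ℝ≥0) * F (r • W) =
      ENNReal.ofReal (r ^ (finrank ℝ V + α)) * G (r • W) := by
    have hcancel : (r ^ (finrank ℝ V + α)).toNNReal * ‖r‖₊ ^ (-(finrank ℝ V : ℝ) - α) = 1 := by
      rw [Real.toNNReal_rpow_of_nonneg hr.le, Real.toNNReal_eq_nnnorm_of_nonneg hr.le,
        ← NNReal.rpow_add (nnnorm_ne_zero_iff.2 hr.ne')]
      simp
    simp only [G]
    rw [nnnorm_smul, NNReal.mul_rpow, ← mul_assoc, ENNReal.ofReal, ← ENNReal.coe_mul, ← mul_assoc,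
      hcancel, one_mul]
  have hscale : ∫⁻ W, G (r • W) = ENNReal.ofReal ((r ^ finrank ℝ V)⁻¹) * ∫⁻ W, G W := by
    rw [← (measurableEmbedding_const_smul₀ hr.ne').lintegral_map, Measure.map_addHaar_smul _ hr.ne',
      lintegral_smul_measure, abs_of_pos (by positivity), smul_eq_mul]
  rw [lintegral_stableMeasure hF, lintegral_stableMeasure (by fun_prop),
    lintegral_congr hweight, lintegral_const_mul' _ _ ENNReal.ofReal_ne_top, hscale, ← mul_assoc,
    ← ENNReal.ofReal_mul (by positivity), Real.rpow_add hr, Real.rpow_natCast,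
    mul_right_comm, mul_inv_cancel₀ (by positivity), one_mul]

theorem integrableOn_Ioi_min_one_rpow_mul_rpow {γ : ℝ} (hα : 0 < α) (hγ : α < γ) :
    IntegrableOn (fun y : ℝ => min 1 y ^ γ * y ^ (-1 - α)) (Set.Ioi 0) := by
  rw [← Set.Ioc_union_Ioi_eq_Ioi zero_le_one]
  refine IntegrableOn.union ?_ ?_
  · have hpow : IntegrableOn (fun y : ℝ => y ^ (γ - 1 - α)) (Set.Ioc 0 1) := by
      rw [← intervalIntegrable_iff_integrableOn_Ioc_of_le zero_le_one]
      exact intervalIntegral.intervalIntegrable_rpow' (by linarith)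
    refine hpow.congr_fun (fun y hy => ?_) measurableSet_Ioc
    dsimp only
    rw [min_eq_right hy.2, ← Real.rpow_add hy.1]
    ring_nf
  · have hpow : IntegrableOn (fun y : ℝ => y ^ (-1 - α)) (Set.Ioi 1) :=
      integrableOn_Ioi_rpow_of_lt (by linarith) one_pos
    refine hpow.congr_fun (fun y hy => ?_) measurableSet_Ioi
    dsimp only
    rw [min_eq_left (le_of_lt hy), Real.one_rpow, one_mul]

theorem lintegral_stableMeasure_truncNorm_rpow_lt_top [Nontrivial V] {γ : ℝ} (hα : 0 < α)
    (hγ : α < γ) : ∫⁻ W, (truncNorm W : ℝ≥0∞) ^ γ ∂stableMeasure V α < ∞ := by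
  have hint : Integrable fun W : V => min 1 ‖W‖ ^ γ * ‖W‖ ^ (-(finrank ℝ V : ℝ) - α) := by
    rw [integrable_fun_norm_addHaar volume
      (f := fun y : ℝ => min 1 y ^ γ * y ^ (-(finrank ℝ V : ℝ) - α))]
    refine (integrableOn_Ioi_min_one_rpow_mul_rpow hα hγ).congr_fun (fun y hy => ?_)
      measurableSet_Ioi
    dsimp only
    rw [smul_eq_mul, ← Real.rpow_natCast, mul_left_comm, ← Real.rpow_add hy,
      Nat.cast_sub finrank_pos]
    ring_nf
  rw [lintegral_stableMeasure (by unfold truncNorm; fun_prop)]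
  refine lt_of_eq_of_lt (lintegral_congr fun W => ?_) hint.2
  rw [enorm_mul, mul_comm, ← ENNReal.coe_rpow_of_nonneg _ (hα.trans hγ).le]
  congr 1 <;> exact (congrArg _ (Real.nnnorm_of_nonneg (by positivity))).symm

/-- The integral of `‖𝐞 ⟪W, Ξ⟫ - 1‖ ^ (2k)` against the stable measure of index `α`, which is a
multiple of `‖Ξ‖ ^ α` because the stable measure is homogeneous and rotation invariant. -/
noncomputable def stableExponent (k : ℕ) (α : ℝ) (Ξ : V) : ℝ≥0∞ :=
  ∫⁻ W, ‖(𝐞 (inner ℝ W Ξ) : ℂ) - 1‖ₑ ^ (2 * k) ∂stableMeasure V α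

theorem stableExponent_linearIsometryEquiv (A : V ≃ₗᵢ[ℝ] V) (Ξ : V) :
    stableExponent k α (A Ξ) = stableExponent k α Ξ := by
  rw [stableExponent, ← lintegral_stableMeasure_comp_linearIsometryEquiv A (by fun_prop)]
  simp only [LinearIsometryEquiv.inner_map_map, stableExponent]

theorem stableExponent_smul {r : ℝ} (hr : 0 < r) (Ξ : V) :
    stableExponent k α (r • Ξ) = ENNReal.ofReal (r ^ α) * stableExponent k α Ξ := by
  rw [stableExponent, stableExponent, ← lintegral_stableMeasure_comp_smul hr (by fun_prop)]
  simp only [real_inner_smul_left, real_inner_smul_right]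

theorem stableExponent_eq_rpow_norm_mul {e Ξ : V} (he : ‖e‖ = 1) (hΞ : Ξ ≠ 0) :
    stableExponent k α Ξ = ENNReal.ofReal (‖Ξ‖ ^ α) * stableExponent k α e := by
  have hnorm : ‖‖Ξ‖ • e‖ = ‖Ξ‖ := by rw [norm_smul, norm_norm, he, mul_one]
  rw [← stableExponent_smul (norm_pos_iff.2 hΞ), ← stableExponent_linearIsometryEquiv
    (Submodule.reflection (ℝ ∙ (‖Ξ‖ • e - Ξ))ᗮ) (‖Ξ‖ • e), Submodule.reflection_sub hnorm]

theorem stableExponent_lt_top {e : V} (he : ‖e‖ = 1) (hα : 0 < α) (hk : α < 2 * k) :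
    stableExponent k α e < ∞ := by
  have : Nontrivial V := ⟨e, 0, norm_ne_zero_iff.1 (he ▸ one_ne_zero)⟩
  have hbound (W : V) : ‖(𝐞 (inner ℝ W e) : ℂ) - 1‖ₑ ^ (2 * k) ≤
      ENNReal.ofReal (2 * π) ^ (2 * k) * (truncNorm W : ℝ≥0∞) ^ ((2 * k : ℕ) : ℝ) := by
    have hle : |inner ℝ W e| ≤ ‖W‖ := by simpa [he] using abs_real_inner_le_norm W e
    rw [ENNReal.rpow_natCast, ← mul_pow, ← ofReal_norm, ← ENNReal.ofReal_coe_nnreal,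
      ← ENNReal.ofReal_mul (by positivity)]
    gcongr
    exact norm_fourierChar_sub_one_le hle
  refine (lintegral_mono hbound).trans_lt ?_
  rw [lintegral_const_mul' _ _ (by finiteness)]
  exact ENNReal.mul_lt_top (by finiteness)
    (lintegral_stableMeasure_truncNorm_rpow_lt_top hα (by exact_mod_cast hk))

theorem stableExponent_pos {e : V} (he : ‖e‖ = 1) : 0 < stableExponent k α e := by
  set U : Set V := {W | W ≠ 0} ∩ {W | (𝐞 (inner ℝ W e) : ℂ) - 1 ≠ 0}
  have hU : IsOpen U := isOpen_ne.inter (isOpen_ne_fun (by fun_prop) (by fun_prop))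
  have hUne : U.Nonempty := by
    refine ⟨(1 / 2 : ℝ) • e, ?_, ?_⟩
    · exact smul_ne_zero (by norm_num) (norm_ne_zero_iff.1 (he ▸ one_ne_zero))
    · have hhalf : (((2 * π * (1 / 2) : ℝ) : ℂ)) * I = π * I := by push_cast; ring
      simp only [Set.mem_ofPred_eq, real_inner_smul_left, real_inner_self_eq_norm_sq, he, one_pow,
        mul_one, Real.fourierChar_apply, hhalf, Complex.exp_pi_mul_I]
      norm_num
  rw [stableExponent, lintegral_stableMeasure (by fun_prop), pos_iff_ne_zero]
  refine fun hzero => (hU.measure_pos volume hUne).ne' ?_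
  rw [lintegral_eq_zero_iff (by fun_prop)] at hzero
  refine measure_mono_null (fun W ⟨hW, hchar⟩ => ?_) hzero
  have hW : W ≠ 0 := hW
  have hchar : (𝐞 (inner ℝ W e) : ℂ) - 1 ≠ 0 := hchar
  simp [NNReal.rpow_eq_zero_iff, hW, hchar]

end StableMeasure

section HypersingularRepresentation

open Lift

open scoped SchwartzMap

variable {E : Type*} [NormedAddCommGroup E]

theorem norm_ofFreq_rpow (ξ : E) (α : ℝ) : ‖ofFreq ξ‖ ^ α = (1 + ‖ξ‖ ^ 2) ^ (α / 2) := by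
  rw [← norm_sq_ofFreq, ← Real.rpow_natCast_mul (norm_nonneg _), Nat.cast_ofNat,
    mul_div_cancel₀ _ two_ne_zero]

theorem neg_one_pow_mul_inv_pow_mul_sub_one_pow (k : ℕ) (z : Circle) :
    (-1 : ℂ) ^ k * (((z ^ k)⁻¹ : Circle) * ((z : ℂ) - 1) ^ (2 * k)) =
      (‖(z : ℂ) - 1‖ ^ (2 * k) : ℝ) := by
  have hk : (-1 : ℂ) * ((z : ℂ)⁻¹ * ((z : ℂ) - 1) ^ 2) = (‖(z : ℂ) - 1‖ ^ 2 : ℝ) := by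
    rw [Complex.ofReal_pow, ← Complex.mul_conj', map_sub, map_one, ← Circle.coe_inv_eq_conj,
      Circle.coe_inv]
    field_simp [Circle.coe_ne_zero z]
    ring
  rw [pow_mul, pow_mul, Complex.ofReal_pow, ← hk, mul_pow, mul_pow, Circle.coe_inv,
    Circle.coe_pow, inv_pow]

theorem continuous_ofFreq : Continuous (ofFreq : E → Lift E) := by
  unfold ofFreq
  fun_prop

theorem enorm_ofReal_norm_pow (z : ℂ) (m : ℕ) : ‖((‖z‖ ^ m : ℝ) : ℂ)‖ₑ = ‖z‖ₑ ^ m := by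
  rw [← ofReal_norm, Complex.norm_real, norm_pow, norm_norm, ENNReal.ofReal_pow (norm_nonneg z),
    ofReal_norm]

variable [InnerProductSpace ℝ E]

theorem continuous_twistShift_apply {X : Type*} [TopologicalSpace X] {W : X → Lift E}
    {f : X → 𝓢(E, ℂ)} (hW : Continuous W) (hf : Continuous fun y : E × X => f y.2 y.1) :
    Continuous fun y : E × X => twistShift (W y.2) (f y.2) y.1 := by
  simp only [twistShift_apply]
  have hshift : Continuous fun y : E × X => (y.1 + (W y.2).snd, y.2) := by fun_prop
  exact (by fun_prop : Continuous fun y : E × X => (𝐞 (W y.2).fst : ℂ)).mul (hf.comp hshift)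

theorem continuous_centeredDiff_apply (k : ℕ) (f : 𝓢(E, ℂ)) :
    Continuous fun y : E × Lift E => centeredDiff k y.2 f y.1 := by
  have hdiff (m : ℕ) : Continuous fun y : E × Lift E => (twistDiff y.2 ^ m) f y.1 := by
    induction m with
    | zero => exact f.continuous.comp continuous_fst
    | succ m ih =>
      simp only [pow_succ', mul_apply_eq_comp, twistDiff]
      exact (continuous_twistShift_apply (f := fun W => (twistDiff W ^ m) f)
        continuous_id ih).sub ih
  have hcenter : Continuous fun W : Lift E => -(k • W) := by fun_prop
  exact (continuous_twistShift_apply (f := fun W => (twistDiff W ^ (2 * k)) f) hcenter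
    (hdiff (2 * k))).const_smul ((-1 : ℂ) ^ k)

variable [MeasurableSpace E] [BorelSpace E] [FiniteDimensional ℝ E] {k : ℕ} {α : ℝ}

theorem fourier_centeredDiff (k : ℕ) (W : Lift E) (f : 𝓢(E, ℂ)) (ξ : E) :
    𝓕 (centeredDiff k W f) ξ =
      (‖(𝐞 (inner ℝ W (ofFreq ξ)) : ℂ) - 1‖ ^ (2 * k) : ℝ) * 𝓕 f ξ := by
  have hdiff (m : ℕ) : 𝓕 ((twistDiff W ^ m) f) ξ =
      ((𝐞 (inner ℝ W (ofFreq ξ)) : ℂ) - 1) ^ m * 𝓕 f ξ := by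
    induction m with
    | zero => simp
    | succ m ih =>
      rw [pow_succ', mul_apply_eq_comp, twistDiff, sub_apply, one_apply_eq_self, sub_eq_add_neg,
        FourierTransform.fourier_add, FourierTransform.fourier_neg, add_apply, neg_apply,
        fourier_twistShift, ← twistDiff, ih]
      ring
  rw [centeredDiff, smul_apply, FourierTransform.fourier_smul, smul_apply, mul_apply_eq_comp,
    fourier_twistShift, hdiff, ← neg_one_pow_mul_inv_pow_mul_sub_one_pow, inner_neg_left,
    inner_smul_left_eq_smul, AddChar.map_neg_eq_inv, AddChar.map_nsmul_eq_pow, smul_eq_mul]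
  ring

theorem eq_integral_fourierChar_smul_fourier (f : 𝓢(E, ℂ)) (x : E) :
    f x = ∫ ξ, 𝐞 (inner ℝ ξ x) • 𝓕 f ξ := by
  conv_lhs => rw [← FourierTransform.fourierInv_fourier_eq (F := 𝓢(E, ℂ)) f]
  rw [SchwartzMap.fourierInv_coe, Real.fourierInv_eq]

theorem stableExponent_ofFreq (k : ℕ) (α : ℝ) (ξ : E) :
    stableExponent k α (ofFreq ξ) =
      ENNReal.ofReal ((1 + ‖ξ‖ ^ 2) ^ (α / 2)) * stableExponent k α (ofFreq (0 : E)) := by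
  have hne : ofFreq ξ ≠ 0 := by
    rw [← norm_ne_zero_iff, ← sq_pos_iff, norm_sq_ofFreq]
    positivity
  rw [stableExponent_eq_rpow_norm_mul norm_ofFreq_zero hne, norm_ofFreq_rpow]

theorem enorm_fourier_besselCLM (s : ℝ) (f : 𝓢(E, ℂ)) (ξ : E) :
    ‖𝓕 (besselCLM s f) ξ‖ₑ = ENNReal.ofReal ((1 + ‖ξ‖ ^ 2) ^ (s / 2)) * ‖𝓕 f ξ‖ₑ := by
  rw [fourier_besselCLM, enorm_mul, ← ofReal_norm, Complex.norm_of_nonneg (by positivity)]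

theorem integrable_fourierChar_smul_fourier_centeredDiff (hα : 0 < α) (hk : α < 2 * k)
    (f : 𝓢(E, ℂ)) (x : E) :
    Integrable (Function.uncurry fun (W : Lift E) ξ =>
      𝐞 (inner ℝ ξ x) • 𝓕 (centeredDiff k W f) ξ) ((stableMeasure (Lift E) α).prod volume) := by
  have hfin := stableExponent_lt_top (V := Lift E) norm_ofFreq_zero hα hk
  simp only [fourier_centeredDiff]
  have hmeas : Measurable (Function.uncurry fun (W : Lift E) (ξ : E) => 𝐞 (inner ℝ ξ x) •
      (((‖(𝐞 (inner ℝ W (ofFreq ξ)) : ℂ) - 1‖ ^ (2 * k) : ℝ) : ℂ) * 𝓕 f ξ)) := by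
    have := continuous_ofFreq (E := E)
    have := (𝓕 f).continuous
    exact Continuous.measurable (by fun_prop)
  refine ⟨hmeas.aestronglyMeasurable, ?_⟩
  rw [HasFiniteIntegral, lintegral_prod_symm _ hmeas.enorm.aemeasurable]
  have hinner (ξ : E) : ∫⁻ W, ‖𝐞 (inner ℝ ξ x) •
      (((‖(𝐞 (inner ℝ W (ofFreq ξ)) : ℂ) - 1‖ ^ (2 * k) : ℝ) : ℂ) * 𝓕 f ξ)‖ₑ
        ∂stableMeasure (Lift E) α =
      stableExponent k α (ofFreq (0 : E)) * ‖𝓕 (besselCLM α f) ξ‖ₑ := by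
    have hchar : ‖(𝐞 (inner ℝ ξ x) : ℂ)‖ₑ = 1 := by
      rw [← ofReal_norm, Circle.norm_coe, ENNReal.ofReal_one]
    simp only [Circle.smul_def, smul_eq_mul, enorm_mul, enorm_ofReal_norm_pow, hchar, one_mul]
    rw [lintegral_mul_const' _ _ enorm_ne_top, ← stableExponent, stableExponent_ofFreq,
      enorm_fourier_besselCLM]
    ring
  simp only [Function.uncurry_apply_pair, hinner]
  rw [lintegral_const_mul' _ _ hfin.ne]
  exact ENNReal.mul_lt_top hfin (𝓕 (besselCLM α f)).integrable.2

theorem integrable_centeredDiff_apply (hα : 0 < α) (hk : α < 2 * k) (f : 𝓢(E, ℂ)) (x : E) :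
    Integrable (fun W => centeredDiff k W f x) (stableMeasure (Lift E) α) := by
  simp only [eq_integral_fourierChar_smul_fourier (centeredDiff k _ f)]
  exact (integrable_fourierChar_smul_fourier_centeredDiff hα hk f x).integral_prod_left

theorem integral_centeredDiff_apply (hα : 0 < α) (hk : α < 2 * k) (f : 𝓢(E, ℂ)) (x : E) :
    ∫ W, centeredDiff k W f x ∂stableMeasure (Lift E) α =
      (stableExponent k α (ofFreq (0 : E))).toReal * besselCLM α f x := by
  simp only [eq_integral_fourierChar_smul_fourier (centeredDiff k _ f)]
  rw [integral_integral_swap (integrable_fourierChar_smul_fourier_centeredDiff hα hk f x),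
    eq_integral_fourierChar_smul_fourier (besselCLM α f), ← integral_const_mul]
  refine integral_congr_ae (ae_of_all _ fun ξ => ?_)
  have hsymbol : ∫ W, ‖(𝐞 (inner ℝ W (ofFreq ξ)) : ℂ) - 1‖ ^ (2 * k) ∂stableMeasure (Lift E) α =
      (1 + ‖ξ‖ ^ 2) ^ (α / 2) * (stableExponent k α (ofFreq (0 : E))).toReal := by
    simp only [← norm_pow]
    rw [integral_norm_eq_lintegral_enorm
      (Continuous.aestronglyMeasurable (by fun_prop))]
    simp only [enorm_pow]
    rw [← stableExponent, stableExponent_ofFreq, ENNReal.toReal_mul,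
      ENNReal.toReal_ofReal (by positivity)]
  simp only [fourier_centeredDiff, fourier_besselCLM, Circle.smul_def, smul_eq_mul]
  rw [integral_const_mul, integral_mul_const, integral_complex_ofReal, hsymbol]
  push_cast
  ring

end HypersingularRepresentation

section ProductEstimate

open Module Lift

open scoped SchwartzMap

variable {E : Type*} [NormedAddCommGroup E] [InnerProductSpace ℝ E]

theorem continuous_leibnizDefect_centeredDiff_apply (k : ℕ) (f g : 𝓢(E, ℂ)) :
    Continuous fun y : E × Lift E => leibnizDefect (centeredDiff k y.2) f g y.1 := by
  have hcont (h : 𝓢(E, ℂ)) := continuous_centeredDiff_apply k h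
  simp only [leibnizDefect, sub_apply, coe_schwartzMul, Pi.mul_apply]
  fun_prop

theorem apply_schwartzMul_eq_leibnizDefect_add (T : 𝓢(E, ℂ) →L[ℂ] 𝓢(E, ℂ)) (f g : 𝓢(E, ℂ)) :
    T (schwartzMul f g) = leibnizDefect T f g + schwartzMul f (T g) + schwartzMul (T f) g := by
  rw [leibnizDefect]
  abel

variable [MeasurableSpace E] [BorelSpace E] [FiniteDimensional ℝ E] {p q : ℝ≥0∞} {α : ℝ}

theorem integral_leibnizDefect_centeredDiff_apply {k : ℕ} (hα : 0 < α) (hk : α < 2 * k)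
    (f g : 𝓢(E, ℂ)) (x : E) :
    ∫ W, leibnizDefect (centeredDiff k W) f g x ∂stableMeasure (Lift E) α =
      (stableExponent k α (ofFreq (0 : E))).toReal * leibnizDefect (besselCLM α) f g x := by
  have hint (h : 𝓢(E, ℂ)) := integrable_centeredDiff_apply hα hk h x
  simp only [leibnizDefect, sub_apply, coe_schwartzMul, Pi.mul_apply]
  rw [integral_sub (by fun_prop) (by fun_prop), integral_sub (by fun_prop) (by fun_prop),
    integral_const_mul, integral_mul_const]
  simp only [integral_centeredDiff_apply hα hk]
  ring

theorem stableExponent_mul_eLpNorm_leibnizDefect_besselCLM_le {k : ℕ} (hα : 0 < α)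
    (hk : α < 2 * k) (hq : 1 ≤ q) (f g : 𝓢(E, ℂ)) :
    stableExponent k α (ofFreq (0 : E)) * eLpNorm (leibnizDefect (besselCLM α) f g) q volume ≤
      ∫⁻ W, eLpNorm (leibnizDefect (centeredDiff k W) f g) q volume
        ∂stableMeasure (Lift E) α := by
  set c := stableExponent k α (ofFreq (0 : E))
  have hc : c ≠ ∞ := (stableExponent_lt_top norm_ofFreq_zero hα hk).ne
  calc c * eLpNorm (leibnizDefect (besselCLM α) f g) q volume
      = eLpNorm (fun x => (c.toReal : ℂ) * leibnizDefect (besselCLM α) f g x) q volume := by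
        have hnorm : ‖(c.toReal : ℂ)‖ₑ = c := by
          rw [← ofReal_norm, Complex.norm_of_nonneg ENNReal.toReal_nonneg, ENNReal.ofReal_toReal hc]
        nth_rw 1 [← hnorm]
        exact (eLpNorm_const_smul _ _ _ _).symm
    _ = eLpNorm (fun x => ∫ W, leibnizDefect (centeredDiff k W) f g x
          ∂stableMeasure (Lift E) α) q volume := by
        simp only [integral_leibnizDefect_centeredDiff_apply hα hk, c]
    _ ≤ ∫⁻ W, eLpNorm (leibnizDefect (centeredDiff k W) f g) q volume
          ∂stableMeasure (Lift E) α := eLpNorm_integral_le_lintegral_eLpNorm hq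
        (continuous_leibnizDefect_centeredDiff_apply k f g).stronglyMeasurable

theorem exists_eLpNorm_leibnizDefect_besselCLM_le (hq : 1 ≤ q) (hqp : q ≤ p)
    (hα : finrank ℝ E * p⁻¹.toReal < α) :
    ∃ C : ℝ≥0∞, C ≠ ∞ ∧ ∀ f g : 𝓢(E, ℂ),
      eLpNorm (leibnizDefect (besselCLM α) (besselCLM (-α) f) (besselCLM (-α) g)) q volume ≤
        C * (eLpNorm f p volume * eLpNorm g q volume) := by
  have hα0 : 0 < α := lt_of_le_of_lt (by positivity) hα
  obtain ⟨ε, hε0, hε⟩ := exists_between (lt_min one_pos (sub_pos.2 hα))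
  obtain ⟨hε1, hεα⟩ := lt_min_iff.1 hε
  have hk : α < 2 * (⌈α⌉₊ : ℝ) := by linarith [Nat.le_ceil α]
  obtain ⟨C, hC, hdefect⟩ := hasOrder_leibnizDefect_centeredDiff (E := E) hq hqp hε0 hε1.le
    (by linarith) (Nat.le_ceil α)
  set c := stableExponent ⌈α⌉₊ α (ofFreq (0 : E))
  have hc0 : c ≠ 0 := (stableExponent_pos norm_ofFreq_zero).ne'
  have hc : c ≠ ∞ := (stableExponent_lt_top norm_ofFreq_zero hα0 hk).ne
  set I := ∫⁻ W, (truncNorm W : ℝ≥0∞) ^ (α + ε / 2) ∂stableMeasure (Lift E) α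
  have hI : I ≠ ∞ := (lintegral_stableMeasure_truncNorm_rpow_lt_top hα0 (by linarith)).ne
  refine ⟨c⁻¹ * (C * I), ENNReal.mul_ne_top (ENNReal.inv_ne_top.2 hc0)
    (ENNReal.mul_ne_top hC hI), fun f g => ?_⟩
  rw [mul_assoc, ← ENNReal.mul_le_iff_le_inv hc0 hc]
  calc _ ≤ ∫⁻ W, eLpNorm (leibnizDefect (centeredDiff ⌈α⌉₊ W) (besselCLM (-α) f)
          (besselCLM (-α) g)) q volume ∂stableMeasure (Lift E) α :=
        stableExponent_mul_eLpNorm_leibnizDefect_besselCLM_le hα0 hk hq _ _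
    _ ≤ ∫⁻ W, C * (truncNorm W : ℝ≥0∞) ^ (α + ε / 2) *
          (eLpNorm f p volume * eLpNorm g q volume) ∂stableMeasure (Lift E) α :=
        lintegral_mono fun W => hdefect W (f, g)
    _ = C * I * (eLpNorm f p volume * eLpNorm g q volume) := by
        rw [lintegral_mul_const' _ _ (ENNReal.mul_ne_top (f.memLp p volume).eLpNorm_ne_top
          (g.memLp q volume).eLpNorm_ne_top), lintegral_const_mul' _ _ hC]

theorem exists_eLpNorm_besselCLM_schwartzMul_le (hq : 1 ≤ q) (hqp : q ≤ p)
    (hα : finrank ℝ E * p⁻¹.toReal < α) :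
    ∃ C : ℝ≥0∞, C ≠ ∞ ∧ ∀ f g : 𝓢(E, ℂ), eLpNorm (besselCLM α (schwartzMul f g)) q volume ≤
      C * (eLpNorm (besselCLM α f) p volume * eLpNorm (besselCLM α g) q volume) := by
  obtain ⟨s, _⟩ := exists_holderTriple hqp
  obtain ⟨C₀, hC₀, hdefect⟩ := exists_eLpNorm_leibnizDefect_besselCLM_le hq hqp hα
  obtain ⟨C₁, hC₁, hbounded⟩ := exists_eLpNorm_besselCLM_neg_le_of_le (s := ∞) (hq.trans hqp)
    le_top (by simpa using hα)
  obtain ⟨C₂, hC₂, hintegrable⟩ := exists_eLpNorm_besselCLM_neg_le_of_le (s := s) hq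
    (ENNReal.HolderTriple.le s p q)
    (by rwa [ENNReal.HolderTriple.inv_sub_inv_eq_inv p s (one_pos.trans_le hq).ne'])
  refine ⟨C₀ + C₁ + C₂, by finiteness, fun f g => ?_⟩
  have hinv (h : 𝓢(E, ℂ)) : besselCLM (-α) (besselCLM α h) = h := by
    rw [← mul_apply_eq_comp, ← besselCLM_add, neg_add_cancel, besselCLM_zero, one_apply_eq_self]
  have hmeas (h : 𝓢(E, ℂ)) := h.continuous.aestronglyMeasurable (μ := volume)
  set u := besselCLM α f
  set v := besselCLM α g
  calc eLpNorm (besselCLM α (schwartzMul f g)) q volume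
      = eLpNorm (leibnizDefect (besselCLM α) f g + schwartzMul f v + schwartzMul u g : 𝓢(E, ℂ))
          q volume := by rw [apply_schwartzMul_eq_leibnizDefect_add]
    _ ≤ eLpNorm (leibnizDefect (besselCLM α) f g) q volume + eLpNorm (schwartzMul f v) q volume +
          eLpNorm (schwartzMul u g) q volume :=
        (eLpNorm_add_le (hmeas _) (hmeas _) hq).trans
          (add_le_add_left (eLpNorm_add_le (hmeas _) (hmeas _) hq) _)
    _ ≤ C₀ * (eLpNorm u p volume * eLpNorm v q volume) +
          C₁ * eLpNorm u p volume * eLpNorm v q volume +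
          eLpNorm u p volume * (C₂ * eLpNorm v q volume) := by
        have hf := hbounded u
        have hg := hintegrable v
        have hfg := hdefect u v
        rw [hinv f] at hf hfg
        rw [hinv g] at hg hfg
        gcongr
        · exact (eLpNorm_schwartzMul_le (p := ∞) (s := q) f v).trans (mul_le_mul_left hf _)
        · exact (eLpNorm_schwartzMul_le (p := p) (s := s) u g).trans (mul_le_mul_right hg _)
    _ = (C₀ + C₁ + C₂) * (eLpNorm u p volume * eLpNorm v q volume) := by ring

end ProductEstimate

theorem product_estimate_small_alpha_general {n : ℕ} {p q : ℝ≥0∞} {α : ℝ} (hq : 1 ≤ q)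
    (hqp : q ≤ p) (hα : n * p⁻¹.toReal < α) :
    ∃ C : ℝ, 0 ≤ C ∧ ∀ φ ψ : Euc n → ℂ, IsTest φ → IsTest ψ →
      HNormE n α q (fun x => φ x * ψ x) ≤ C * HNormE n α p φ * HNormE n α q ψ := by
  obtain ⟨C, hC, hmul⟩ := exists_eLpNorm_besselCLM_schwartzMul_le (E := Euc n) hq hqp
    (by simpa using hα)
  refine ⟨C.toReal, ENNReal.toReal_nonneg, fun φ ψ hφ hψ => ?_⟩
  set f := hφ.2.toSchwartzMap hφ.1
  set g := hψ.2.toSchwartzMap hψ.1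
  have htop (r : ℝ≥0∞) (h : SchwartzMap (Euc n) ℂ) : eLpNorm (besselCLM α h) r volume ≠ ∞ :=
    ((besselCLM α h).memLp r volume).eLpNorm_ne_top
  have hreal := ENNReal.toReal_mono (by finiteness [htop p f, htop q g]) (hmul f g)
  rw [ENNReal.toReal_mul, ENNReal.toReal_mul, ← mul_assoc] at hreal
  simp only [coe_besselCLM] at hreal
  exact hreal

/-- For `1<p<∞` with `p' ≤ p`, `0 < α < n/p'` and `p > n/α`:
`‖φψ‖_{H^α_{p'}} ≤ C‖φ‖_{H^α_p}‖ψ‖_{H^α_{p'}}` for all test functions. -/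
theorem product_estimate_small_alpha {n : ℕ} (p α : ℝ) (hp1 : 1 < p)
    (hpp : conjExp p ≤ p) (hα0 : 0 < α) (hα : α < (n : ℝ) / conjExp p)
    (hpα : (n : ℝ) / α < p) :
    ∃ C : ℝ, 0 ≤ C ∧ ∀ φ ψ : Euc n → ℂ, IsTest φ → IsTest ψ →
      HNormE n α (conjExpE p) (fun x => φ x * ψ x) ≤
        C * HNorm n α p φ * HNormE n α (conjExpE p) ψ := by
  have hp0 : 0 < p := one_pos.trans hp1
  have hconj : conjExpE p = ENNReal.ofReal (conjExp p) := if_neg hp1.not_ge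
  refine product_estimate_small_alpha_general ?_ ?_ ?_
  · rw [hconj, ENNReal.one_le_ofReal]
    exact (one_le_div (sub_pos.2 hp1)).2 (sub_le_self p zero_le_one)
  · rw [hconj]
    exact ENNReal.ofReal_le_ofReal hpp
  · rw [← ENNReal.ofReal_inv_of_pos hp0, ENNReal.toReal_ofReal (inv_nonneg.2 hp0.le),
      ← div_eq_mul_inv]
    exact (div_lt_comm₀ hα0 hp0).1 hpα
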